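/- arXiv:1911.04277 — 4 statements merged into one kernel-verified Lean document; each statement's English description precedes it below -/
import Mathlib

section
/- Let G be a finite simple undirected graph with no isolated vertices admitting a split partition (K, I) where K is a clique, I is an independent set, and every vertex of K has at least one neighbor in I. If |I| = 2 and |K| is odd, then G is equimatchable. -/
open Finset

variable {V : Type*}

/-- A matching of `G`: a set of edges of `G` that are pairwise disjoint. -/
def IsMatching (G : SimpleGraph V) (M : Finset (Sym2 V)) : Prop :=
  (↑M : Set (Sym2 V)) ⊆ G.edgeSet ∧
    ∀ e ∈ M, ∀ f ∈ M, e ≠ f → ∀ v : V, v ∈ e → v ∉ f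

/-- A maximal matching of `G`: a matching such that every edge of `G` shares an
endpoint with some edge of the matching. -/
def IsMaximalMatching (G : SimpleGraph V) (M : Finset (Sym2 V)) : Prop :=
  IsMatching G M ∧ ∀ e ∈ G.edgeSet, ∃ f ∈ M, ∃ v : V, v ∈ e ∧ v ∈ f

/-- `G` is equimatchable if all maximal matchings have the same cardinality. -/
def Equimatchable (G : SimpleGraph V) : Prop :=
  ∀ M₁ M₂ : Finset (Sym2 V), IsMaximalMatching G M₁ → IsMaximalMatching G M₂ →
    M₁.card = M₂.card

/-- An independent set: a set of pairwise non-adjacent vertices. -/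
def IsIndepSet (G : SimpleGraph V) (s : Set V) : Prop :=
  s.Pairwise fun a b => ¬ G.Adj a b

/-- A split graph: the vertex set can be partitioned into a clique and an
independent set. -/
def IsSplitGraph (G : SimpleGraph V) : Prop :=
  ∃ K I : Set V, Disjoint K I ∧ K ∪ I = Set.univ ∧ G.IsClique K ∧ IsIndepSet G I

/-!
The vertices missed by a maximal matching are pairwise non-adjacent. In a graph covered by a
clique `K` and a set `I` such that every vertex of `K` has a neighbour in `I`, an independent set
can only trade one vertex of `I` for a vertex of `K`, so it has at most `|I| = 2` elements. As the
number of vertices is odd and a matching covers an even number of them, every maximal matching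
misses exactly one vertex.
-/

/-- The vertices covered (saturated) by a set of edges `M`. -/
def coveredVertices [DecidableEq V] (M : Finset (Sym2 V)) : Finset V :=
  M.biUnion Sym2.toFinset

section Matching

variable [DecidableEq V] {G : SimpleGraph V} {M : Finset (Sym2 V)}

theorem mem_coveredVertices {v : V} : v ∈ coveredVertices M ↔ ∃ e ∈ M, v ∈ e := by
  simp [coveredVertices]

theorem IsMatching.card_coveredVertices (hM : IsMatching G M) :
    #(coveredVertices M) = 2 * #M := by
  obtain ⟨hedges, hpairwise⟩ := hM
  have hdisjoint : (M : Set (Sym2 V)).PairwiseDisjoint Sym2.toFinset := fun e he f hf hef =>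
    Finset.disjoint_left.2 fun v hve hvf =>
      hpairwise e he f hf hef v (Sym2.mem_toFinset.1 hve) (Sym2.mem_toFinset.1 hvf)
  have hcard : ∀ e ∈ M, #e.toFinset = 2 := fun e he =>
    Sym2.card_toFinset_of_not_isDiag e (G.not_isDiag_of_mem_edgeSet (hedges he))
  rw [coveredVertices, card_biUnion hdisjoint, sum_const_nat hcard, mul_comm]

theorem IsMaximalMatching.isIndepSet_compl_coveredVertices (hM : IsMaximalMatching G M) :
    G.IsIndepSet (coveredVertices M : Set V)ᶜ := by
  intro a ha b hb _ hab
  obtain ⟨f, hf, v, hv, hvf⟩ := hM.2 s(a, b) hab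
  have hcovered : v ∈ coveredVertices M := mem_coveredVertices.2 ⟨f, hf, hvf⟩
  rcases Sym2.mem_iff.1 hv with rfl | rfl
  · exact ha hcovered
  · exact hb hcovered

end Matching

section IndepNum

variable [Fintype V] {G : SimpleGraph V}

theorem IsMaximalMatching.card_le_two_mul_card_add_indepNum {M : Finset (Sym2 V)}
    (hM : IsMaximalMatching G M) : Fintype.card V ≤ 2 * #M + G.indepNum := by
  classical
  have hmissed : #(coveredVertices M)ᶜ ≤ G.indepNum :=
    SimpleGraph.IsIndepSet.card_le_indepNum <| by
      simpa only [coe_compl] using hM.isIndepSet_compl_coveredVertices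
  rw [← card_add_card_compl (coveredVertices M), hM.1.card_coveredVertices]
  gcongr

theorem equimatchable_of_odd_card_of_indepNum_le_two
    (hodd : Odd (Fintype.card V)) (hindepNum : G.indepNum ≤ 2) :
    Equimatchable G := by
  classical
  have hcard {M : Finset (Sym2 V)} (hM : IsMaximalMatching G M) :
      2 * #M + 1 = Fintype.card V := by
    have hlower : Fintype.card V ≤ 2 * #M + G.indepNum := hM.card_le_two_mul_card_add_indepNum
    have hupper : 2 * #M ≤ Fintype.card V :=
      hM.1.card_coveredVertices ▸ card_le_univ (coveredVertices M)
    obtain ⟨n, hn⟩ := hodd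
    omega
  intro M₁ M₂ hM₁ hM₂
  have hdouble : 2 * #M₁ + 1 = 2 * #M₂ + 1 := (hcard hM₁).trans (hcard hM₂).symm
  omega

theorem indepNum_le_card_of_isClique_of_forall_exists_adj [DecidableEq V] {K I : Finset V}
    (hcover : K ∪ I = univ) (hclique : G.IsClique (K : Set V))
    (hKI : ∀ k ∈ K, ∃ i ∈ I, G.Adj k i) : G.indepNum ≤ #I := by
  obtain ⟨s, hs, hcard⟩ := G.exists_isNIndepSet_indepNum
  rw [← hcard]
  have hmem (v : V) : v ∈ K ∨ v ∈ I := mem_union.1 (hcover ▸ mem_univ v)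
  by_cases hsK : ∃ k ∈ s, k ∈ K
  · obtain ⟨k, hks, hkK⟩ := hsK
    obtain ⟨i, hiI, hki⟩ := hKI k hkK
    have hexchange : s ⊆ insert k (I.erase i) := by
      intro v hv
      rw [mem_insert, mem_erase, or_iff_not_imp_left]
      intro hvk
      have hnadj : ¬ G.Adj k v := hs hks hv (Ne.symm hvk)
      exact ⟨fun hvi => hnadj (hvi ▸ hki),
        (hmem v).resolve_left fun hvK => hnadj (hclique hkK hvK (Ne.symm hvk))⟩
    calc
      #s ≤ #(insert k (I.erase i)) := card_le_card hexchange
      _ ≤ #(I.erase i) + 1 := card_insert_le _ _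
      _ = #I := card_erase_add_one hiI
  · exact card_le_card fun v hv => (hmem v).resolve_left fun hvK => hsK ⟨v, hv, hvK⟩

end IndepNum

theorem stmt_1_general [Fintype V] [DecidableEq V] (G : SimpleGraph V) (K I : Finset V)
    (hcover : K ∪ I = univ) (hclique : G.IsClique (K : Set V))
    (hKI : ∀ k ∈ K, ∃ i ∈ I, G.Adj k i)
    (hI : #I ≤ 2) (hodd : Odd (Fintype.card V)) :
    Equimatchable G :=
  equimatchable_of_odd_card_of_indepNum_le_two hodd <|
    (indepNum_le_card_of_isClique_of_forall_exists_adj hcover hclique hKI).trans hI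

theorem stmt_1 {V : Type*} [Fintype V] [DecidableEq V]
    (G : SimpleGraph V) [DecidableRel G.Adj]
    (hNoIso : ∀ v : V, ∃ w : V, G.Adj v w)
    (K I : Finset V)
    (hdisj : Disjoint K I) (hcover : K ∪ I = Finset.univ)
    (hclique : G.IsClique (K : Set V)) (hindep : IsIndepSet G (I : Set V))
    (hKI : ∀ k ∈ K, ∃ i ∈ I, G.Adj k i)
    (hI2 : I.card = 2) (hKodd : Odd K.card) :
    Equimatchable G := by
  have hcard : Fintype.card V = #K + 2 := by
    rw [← card_univ, ← hcover, card_union_of_disjoint hdisj, hI2]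
  exact stmt_1_general G K I hcover hclique hKI hI2.le (hcard ▸ hKodd.add_even even_two)
end

section
/- Let G be a finite simple undirected graph with no isolated vertices admitting a split partition (K, I) where K is a clique, I is an independent set, and every vertex of K has at least one neighbor in I. If G is equimatchable and |I| ≥ 2 and |K| ≥ 2, then |K| is odd. -/
open Finset

variable {V : Type*}

/-!
A matching whose saturated vertices form a vertex cover is maximal, so in an equimatchable graph all
such matchings saturate equally many vertices. The clique `K` is a vertex cover. If `|K|` were even,
a perfect matching of `K` would saturate exactly `K`. But there are two disjoint edges `ai` and `bj`
leaving `K`, and adding them to a perfect matching of `K \ {a, b}` would saturate `K ∪ {i, j}`,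
which has two more vertices.
-/

variable {G : SimpleGraph V} {M : Finset (Sym2 V)} {N N₁ N₂ : G.Subgraph} {K I : Set V}

/-- The vertices saturated by a finite set `M` of edges, i.e. the endpoints of its members. -/
def saturatedVerts (M : Finset (Sym2 V)) : Set V :=
  {v | ∃ e ∈ M, v ∈ e}

theorem IsMatching.ncard_saturatedVerts (hM : IsMatching G M) :
    (saturatedVerts M).ncard = 2 * M.card := by
  classical
  have hbiUnion : saturatedVerts M = M.biUnion Sym2.toFinset := by
    ext v
    simp [saturatedVerts]
  have hdisj : (M : Set (Sym2 V)).PairwiseDisjoint Sym2.toFinset := fun e he f hf hef ↦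
    Finset.disjoint_left.2 fun v hve hvf ↦
      hM.2 e he f hf hef v (Sym2.mem_toFinset.1 hve) (Sym2.mem_toFinset.1 hvf)
  rw [hbiUnion, Set.ncard_coe_finset, Finset.card_biUnion hdisj, mul_comm]
  exact Finset.sum_const_nat fun e he ↦
    e.card_toFinset_of_not_isDiag (G.not_isDiag_of_mem_edgeSet (hM.1 he))

theorem IsMatching.isMaximalMatching_of_isVertexCover (hM : IsMatching G M)
    (hcover : G.IsVertexCover (saturatedVerts M)) : IsMaximalMatching G M := by
  refine ⟨hM, fun e he ↦ ?_⟩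
  induction e using Sym2.ind with
  | _ x y =>
    rcases hcover he with ⟨f, hf, hxf⟩ | ⟨f, hf, hyf⟩
    · exact ⟨f, hf, x, Sym2.mem_mk_left x y, hxf⟩
    · exact ⟨f, hf, y, Sym2.mem_mk_right x y, hyf⟩

theorem isMatching_of_coe_subset_edgeSet (hN : N.IsMatching)
    (hM : (M : Set (Sym2 V)) ⊆ N.edgeSet) : IsMatching G M := by
  refine ⟨hM.trans N.edgeSet_subset, fun e he f hf hef v hve hvf ↦ hef ?_⟩
  obtain ⟨x, rfl⟩ := hve
  obtain ⟨y, rfl⟩ := hvf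
  exact congrArg (fun w ↦ s(v, w)) (hN.eq_of_adj_left (hM he) (hM hf))

theorem exists_isMatching_saturatedVerts_eq (hN : N.IsMatching) (hfin : N.verts.Finite) :
    ∃ M : Finset (Sym2 V), IsMatching G M ∧ saturatedVerts M = N.verts := by
  have hedge : N.edgeSet.Finite :=
    hfin.toFinset.sym2.finite_toSet.subset fun e he ↦ Finset.mem_sym2_iff.2 fun v hv ↦
      hfin.mem_toFinset.2 (SimpleGraph.Subgraph.mem_verts_of_mem_edge he hv)
  refine ⟨hedge.toFinset, isMatching_of_coe_subset_edgeSet hN hedge.coe_toFinset.subset, ?_⟩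
  ext v
  simp [saturatedVerts, hN.verts_eq_biUnion_edgeSet]

theorem Equimatchable.ncard_verts_eq (hG : Equimatchable G)
    (hN₁ : N₁.IsMatching) (hfin₁ : N₁.verts.Finite) (hcover₁ : G.IsVertexCover N₁.verts)
    (hN₂ : N₂.IsMatching) (hfin₂ : N₂.verts.Finite) (hcover₂ : G.IsVertexCover N₂.verts) :
    N₁.verts.ncard = N₂.verts.ncard := by
  obtain ⟨M₁, hM₁, hverts₁⟩ := exists_isMatching_saturatedVerts_eq hN₁ hfin₁
  obtain ⟨M₂, hM₂, hverts₂⟩ := exists_isMatching_saturatedVerts_eq hN₂ hfin₂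
  rw [← hverts₁] at hcover₁ ⊢
  rw [← hverts₂] at hcover₂ ⊢
  rw [hM₁.ncard_saturatedVerts, hM₂.ncard_saturatedVerts,
    hG M₁ M₂ (hM₁.isMaximalMatching_of_isVertexCover hcover₁)
      (hM₂.isMaximalMatching_of_isVertexCover hcover₂)]

theorem exists_isMatching_verts_eq_insert_insert_of_adj (hN : N.IsMatching) {x y : V}
    (hxy : G.Adj x y) (hx : x ∉ N.verts) (hy : y ∉ N.verts) :
    ∃ N' : G.Subgraph, N'.verts = insert x (insert y N.verts) ∧ N'.IsMatching := by
  have hedge : (G.subgraphOfAdj hxy).IsMatching := .subgraphOfAdj hxy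
  refine ⟨G.subgraphOfAdj hxy ⊔ N, by simp [Set.insert_union], hedge.sup hN ?_⟩
  simp [hedge.support_eq_verts, hN.support_eq_verts, hx, hy]

theorem exists_isMatching_verts_eq_insert_insert_of_isClique (hK : G.IsClique K) (hfin : K.Finite)
    (heven : Even K.ncard) {a b i j : V} (ha : a ∈ K) (hb : b ∈ K) (hi : i ∉ K) (hj : j ∉ K)
    (hab : a ≠ b) (hij : i ≠ j) (hai : G.Adj a i) (hbj : G.Adj b j) :
    ∃ N : G.Subgraph, N.verts = insert i (insert j K) ∧ N.IsMatching := by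
  have heven' : Even (K \ {a, b}).ncard := by
    rw [Set.ncard_sdiff (Set.pair_subset ha hb), Set.ncard_pair hab]
    exact heven.tsub even_two
  obtain ⟨N₀, hverts₀, hN₀⟩ :=
    ((hK.subset Set.sdiff_subset).even_iff_exists_isMatching hfin.sdiff).1 heven'
  obtain ⟨N₁, hverts₁, hN₁⟩ := exists_isMatching_verts_eq_insert_insert_of_adj hN₀ hbj
    (by simp [hverts₀]) (by simp [hverts₀, hj])
  obtain ⟨N₂, hverts₂, hN₂⟩ := exists_isMatching_verts_eq_insert_insert_of_adj hN₁ hai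
    (by simp [hverts₁, hverts₀, hab, ne_of_mem_of_not_mem ha hj])
    (by simp [hverts₁, hverts₀, hi, hij, (ne_of_mem_of_not_mem hb hi).symm])
  refine ⟨N₂, ?_, hN₂⟩
  rw [hverts₂, hverts₁, hverts₀]
  grind

theorem Equimatchable.odd_ncard_of_isClique_of_isVertexCover (hG : Equimatchable G)
    (hK : G.IsClique K) (hfin : K.Finite) (hcover : G.IsVertexCover K) {a b i j : V}
    (ha : a ∈ K) (hb : b ∈ K) (hi : i ∉ K) (hj : j ∉ K) (hab : a ≠ b) (hij : i ≠ j)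
    (hai : G.Adj a i) (hbj : G.Adj b j) : Odd K.ncard := by
  by_contra hodd
  have heven : Even K.ncard := Nat.not_odd_iff_even.1 hodd
  obtain ⟨N₁, hverts₁, hN₁⟩ := (hK.even_iff_exists_isMatching hfin).1 heven
  obtain ⟨N₂, hverts₂, hN₂⟩ :=
    exists_isMatching_verts_eq_insert_insert_of_isClique hK hfin heven ha hb hi hj hab hij hai hbj
  have hcard : K.ncard = (insert i (insert j K)).ncard := by
    have hcover' : G.IsVertexCover (insert i (insert j K)) :=
      hcover.subset ((Set.subset_insert j K).trans (Set.subset_insert i _))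
    rw [← hverts₂, ← hverts₁]
    exact hG.ncard_verts_eq hN₁ (hverts₁ ▸ hfin) (hverts₁ ▸ hcover)
      hN₂ (hverts₂ ▸ (hfin.insert j).insert i) (hverts₂ ▸ hcover')
  rw [Set.ncard_insert_of_notMem (by simp [hi, hij]) (hfin.insert j),
    Set.ncard_insert_of_notMem hj hfin] at hcard
  omega

theorem exists_disjoint_related_pairs {α β : Type*} {r : α → β → Prop} {s : Set α} {t : Set β}
    (hs : s.Nontrivial) (ht : t.Nontrivial) (hst : ∀ a ∈ s, ∃ b ∈ t, r a b)
    (hts : ∀ b ∈ t, ∃ a ∈ s, r a b) :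
    ∃ a₁ ∈ s, ∃ a₂ ∈ s, ∃ b₁ ∈ t, ∃ b₂ ∈ t, a₁ ≠ a₂ ∧ b₁ ≠ b₂ ∧ r a₁ b₁ ∧ r a₂ b₂ := by
  obtain ⟨a, ha⟩ := hs.nonempty
  obtain ⟨b, hb, hab⟩ := hst a ha
  obtain ⟨b', hb', hbb'⟩ := ht.exists_ne b
  obtain ⟨a', ha', hab'⟩ := hts b' hb'
  by_cases haa' : a' = a
  · subst haa'
    obtain ⟨c, hc, hca⟩ := hs.exists_ne a'
    obtain ⟨d, hd, hcd⟩ := hst c hc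
    by_cases hdb : d = b
    · exact ⟨a', ha, c, hc, b', hb', d, hd, hca.symm, hdb ▸ hbb', hab', hcd⟩
    · exact ⟨a', ha, c, hc, b, hb, d, hd, hca.symm, Ne.symm hdb, hab, hcd⟩
  · exact ⟨a, ha, a', ha', b, hb, b', hb', Ne.symm haa', hbb'.symm, hab, hab'⟩

theorem stmt_3_general (hfin : K.Finite) (hKI : IsCompl K I) (hK : G.IsClique K)
    (hI : IsIndepSet G I) (hadjK : ∀ k ∈ K, ∃ i ∈ I, G.Adj k i) (hadjI : ∀ i ∈ I, ∃ w, G.Adj i w)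
    (hG : Equimatchable G) (hIntriv : I.Nontrivial) (hKntriv : K.Nontrivial) : Odd K.ncard := by
  obtain rfl : I = Kᶜ := hKI.compl_eq.symm
  have hcover : G.IsVertexCover K := SimpleGraph.isIndepSet_compl_iff_isVertexCover.1 hI
  have hadjI' : ∀ i ∈ Kᶜ, ∃ k ∈ K, G.Adj k i := fun i hi ↦
    let ⟨k, hik⟩ := hadjI i hi
    ⟨k, (hcover hik).resolve_left hi, hik.symm⟩
  obtain ⟨a, ha, b, hb, i, hi, j, hj, hab, hij, hai, hbj⟩ :=
    exists_disjoint_related_pairs hKntriv hIntriv hadjK hadjI'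
  exact hG.odd_ncard_of_isClique_of_isVertexCover hK hfin hcover ha hb hi hj hab hij hai hbj

theorem stmt_3 {V : Type*} [Fintype V] [DecidableEq V]
    (G : SimpleGraph V) [DecidableRel G.Adj]
    (hNoIso : ∀ v : V, ∃ w : V, G.Adj v w)
    (K I : Finset V)
    (hdisj : Disjoint K I) (hcover : K ∪ I = Finset.univ)
    (hclique : G.IsClique (K : Set V)) (hindep : IsIndepSet G (I : Set V))
    (hKI : ∀ k ∈ K, ∃ i ∈ I, G.Adj k i)
    (hEq : Equimatchable G) (hI2 : 2 ≤ I.card) (hK2 : 2 ≤ K.card) :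
    Odd K.card := by
  have hcompl : IsCompl (K : Set V) I :=
    ⟨Finset.disjoint_coe.2 hdisj, codisjoint_iff.2 <| show (K ∪ I : Set V) = Set.univ by
      rw [← Finset.coe_union, hcover, Finset.coe_univ]⟩
  simpa using stmt_3_general K.finite_toSet hcompl hclique hindep hKI (fun i _ ↦ hNoIso i) hEq
    (Finset.one_lt_card_iff_nontrivial.1 hI2) (Finset.one_lt_card_iff_nontrivial.1 hK2)
end

section
/- Let G be a finite simple undirected graph with no isolated vertices admitting a split partition (K, I) where K is a clique, I is an independent set, and every vertex of K has at least one neighbor in I. Assume G is equimatchable, |I| ≥ 3, and |K| ≥ 2. If v ∈ K and i ∈ I are such that vi is not an edge of G, then every vertex j ∈ I that is adjacent to v satisfies either N(j) = K − N(i) or N(j) = K, where N(u) denotes the set of neighbors of u in G. -/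
open Finset

variable {V : Type*}

/-!
A matching that covers the clique `K` is maximal, and its size is determined by the number of its
`K`-`I` edges. A set of `t` disjoint `K`-`I` edges extends to such a matching, by pairing up the
rest of `K`, whenever `t` and `|K|` have the same parity, so equimatchability allows only one
value of `t` in each parity class: there are at most two disjoint `K`-`I` edges, and at most one
when `|K|` is even. As `vj` and any edge at `i` are disjoint, `|K|` is odd, hence at least three.

By König's theorem two vertices cover all `K`-`I` edges, and since `K` and `I` are too large for
both of them to lie on one side, these are some `k ∈ K` and `l ∈ I`. Hence `N(b) = {k}` for every
`b ∈ I` other than `l`, and `K \ {k} ⊆ N(l) ⊆ K`; the claim is read off according to whether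
`i = l`.
-/

section Konig

variable {α β ι κ : Type*} {r : α → β → Prop}

/-- A matching of the relation `r`, that is, a set of disjoint edges of a bipartite graph, encoded
as a family of related pairs `x i`, `y i` so that its size is the cardinality of `ι`. -/
structure IsRelMatching (r : α → β → Prop) (x : ι → α) (y : ι → β) : Prop where
  rel : ∀ i, r (x i) (y i)
  injective_left : Function.Injective x
  injective_right : Function.Injective y

/-- A vertex cover of the relation `r`, seen as the edges of a bipartite graph: `C` and `D` are its
parts in the two sides. -/
def IsRelCover (r : α → β → Prop) (C : Finset α) (D : Finset β) : Prop :=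
  ∀ ⦃a b⦄, r a b → a ∈ C ∨ b ∈ D

theorem IsRelMatching.comp {x : ι → α} {y : ι → β} (h : IsRelMatching r x y) (e : κ ↪ ι) :
    IsRelMatching r (x ∘ e) (y ∘ e) where
  rel i := h.rel (e i)
  injective_left := h.injective_left.comp e.injective
  injective_right := h.injective_right.comp e.injective

theorem IsRelMatching.pair {a a' : α} {b b' : β} (h : r a b) (h' : r a' b') (ha : a ≠ a')
    (hb : b ≠ b') : IsRelMatching r ![a, a'] ![b, b'] where
  rel := Fin.forall_fin_two.2 ⟨h, h'⟩
  injective_left := by simp [Function.Injective, Fin.forall_fin_two, ha, ha.symm]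
  injective_right := by simp [Function.Injective, Fin.forall_fin_two, hb, hb.symm]

theorem IsRelCover.flip {C : Finset α} {D : Finset β} (h : IsRelCover r C D) :
    IsRelCover (flip r) D C :=
  fun _ _ hr ↦ (h hr).symm

theorem IsRelCover.right_nonempty {C A : Finset α} {D : Finset β} (h : IsRelCover r C D)
    (hA : ∀ a ∈ A, ∃ b, r a b) (hCA : #C < #A) : D.Nonempty := by
  obtain ⟨a, haA, haC⟩ := exists_mem_notMem_of_card_lt_card hCA
  obtain ⟨b, hab⟩ := hA a haA
  exact ⟨b, (h hab).resolve_left haC⟩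

theorem IsRelCover.exists_singletons {C A : Finset α} {D B : Finset β} (h : IsRelCover r C D)
    (hCD : #C + #D ≤ 2) (hA : ∀ a ∈ A, ∃ b, r a b) (hB : ∀ b ∈ B, ∃ a, r a b)
    (hA3 : 3 ≤ #A) (hB3 : 3 ≤ #B) : ∃ a b, IsRelCover r {a} {b} := by
  have hD : 0 < #D := card_pos.2 (h.right_nonempty hA (by lia))
  have hC : 0 < #C := card_pos.2 (h.flip.right_nonempty hB (by lia))
  obtain ⟨a, rfl⟩ := card_eq_one.1 (show #C = 1 by lia)
  obtain ⟨b, rfl⟩ := card_eq_one.1 (show #D = 1 by lia)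
  exact ⟨a, b, h⟩

theorem IsRelCover.exists_injective_of_minimal [Finite β] {C : Finset α} {D : Finset β}
    (h : IsRelCover r C D) (hmin : ∀ C' D', IsRelCover r C' D' → #C + #D ≤ #C' + #D') :
    ∃ f : C → β, Function.Injective f ∧ ∀ a : C, r a (f a) ∧ f a ∉ D := by
  classical
  have := Fintype.ofFinite β
  refine (Fintype.all_card_le_filter_rel_iff_exists_injective
    (fun (a : C) b ↦ r a b ∧ b ∉ D)).1 fun S ↦ ?_
  set N : Finset β := {b | ∃ a ∈ S, r a b ∧ b ∉ D}
  set S' : Finset α := S.map (Function.Embedding.subtype _) with hS'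
  have hS'C : S' ⊆ C := map_subtype_subset S
  -- A set `S` violating Hall's condition could be traded for its smaller neighbourhood `N`.
  have hexchange : IsRelCover r (C \ S') (D ∪ N) := by
    intro a b hab
    by_cases hb : b ∈ D
    · exact .inr (mem_union_left N hb)
    · have haC : a ∈ C := (h hab).resolve_right hb
      by_cases haS : ⟨a, haC⟩ ∈ S
      · exact .inr (mem_union_right D (mem_filter.2 ⟨mem_univ b, ⟨a, haC⟩, haS, hab, hb⟩))
      · exact .inl (mem_sdiff.2 ⟨haC, by simpa [hS', haC] using haS⟩)
  have hle := hmin _ _ hexchange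
  have hC := card_sdiff_add_card_eq_card hS'C
  have hDN := card_union_le D N
  have hSS' : #S' = #S := card_map _
  lia

/-- **König's theorem** for finite bipartite graphs. The index type `C ⊕ D` of the matching says
that it is as large as the cover. -/
theorem exists_isRelCover_isRelMatching [Finite α] [Finite β] (r : α → β → Prop) :
    ∃ (C : Finset α) (D : Finset β) (x : C ⊕ D → α) (y : C ⊕ D → β),
      IsRelCover r C D ∧ IsRelMatching r x y := by
  have := Fintype.ofFinite α
  obtain ⟨⟨C, D⟩, hCD, hmin⟩ := exists_minimalFor_of_wellFoundedLT
    (fun p : Finset α × Finset β ↦ IsRelCover r p.1 p.2) (fun p ↦ #p.1 + #p.2)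
    ⟨(univ, ∅), fun a _ _ ↦ .inl (mem_univ a)⟩
  replace hmin C' D' (h : IsRelCover r C' D') : #C + #D ≤ #C' + #D' :=
    (le_total _ _).elim id (hmin (j := (C', D')) h)
  obtain ⟨f, hf, hfD⟩ := hCD.exists_injective_of_minimal hmin
  obtain ⟨g, hg, hgC⟩ := hCD.flip.exists_injective_of_minimal fun D' C' h ↦ by
    simpa only [add_comm] using hmin C' D' h.flip
  refine ⟨C, D, Sum.elim (↑) g, Sum.elim f (↑), hCD, ?_, ?_, ?_⟩
  · exact Sum.rec (fun a ↦ (hfD a).1) (fun b ↦ (hgC b).1)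
  · exact Subtype.val_injective.sumElim hg fun a b hab ↦ (hgC b).2 (hab ▸ a.2)
  · exact hf.sumElim Subtype.val_injective fun a b hab ↦ (hfD a).2 (hab ▸ b.2)

end Konig

section Equimatchable

variable {G : SimpleGraph V}

theorem IsMatching.ncard_biUnion {N : Finset (Sym2 V)} (hN : IsMatching G N) :
    (⋃ e ∈ N, (e : Set V)).ncard = 2 * #N := by
  classical
  have hdisj : (N : Set (Sym2 V)).PairwiseDisjoint Sym2.toFinset := fun e he f hf hef ↦
    disjoint_left.2 fun a hae haf ↦
      hN.2 e he f hf hef a (Sym2.mem_toFinset.1 hae) (Sym2.mem_toFinset.1 haf)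
  have hunion : (⋃ e ∈ N, (e : Set V)) = N.biUnion Sym2.toFinset := by
    ext a
    simp
  rw [hunion, Set.ncard_coe_finset, card_biUnion hdisj, mul_comm]
  exact sum_const_nat fun e he ↦
    Sym2.card_toFinset_of_not_isDiag e (G.not_isDiag_of_mem_edgeSet (hN.1 he))

theorem isMatching_of_coe_eq_edgeSet {M : G.Subgraph} (hM : M.IsMatching) {N : Finset (Sym2 V)}
    (hN : (N : Set (Sym2 V)) = M.edgeSet) : IsMatching G N := by
  have hmem {e : Sym2 V} : e ∈ N ↔ e ∈ M.edgeSet := by rw [← hN, mem_coe]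
  refine ⟨hN ▸ M.edgeSet_subset, fun e he f hf hef a hae haf ↦ hef ?_⟩
  obtain ⟨b, rfl⟩ := Sym2.mem_iff_exists.1 hae
  obtain ⟨c, rfl⟩ := Sym2.mem_iff_exists.1 haf
  exact congrArg (s(a, ·)) (hM.eq_of_adj_left (hmem.1 he) (hmem.1 hf))

theorem exists_isMaximalMatching_of_isVertexCover [Finite V] {M : G.Subgraph} (hM : M.IsMatching)
    (hcover : G.IsVertexCover M.verts) :
    ∃ N : Finset (Sym2 V), IsMaximalMatching G N ∧ M.verts.ncard = 2 * #N := by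
  have hN := M.edgeSet.toFinite.coe_toFinset
  set N := M.edgeSet.toFinite.toFinset
  have hmatch : IsMatching G N := isMatching_of_coe_eq_edgeSet hM hN
  have hverts : M.verts = ⋃ e ∈ N, (e : Set V) := by
    simp only [hM.verts_eq_biUnion_edgeSet, ← hN, mem_coe]
  refine ⟨N, ⟨hmatch, fun e he ↦ ?_⟩, hverts ▸ hmatch.ncard_biUnion⟩
  obtain ⟨a, hae, haM⟩ : ∃ a ∈ e, a ∈ M.verts := by
    induction e with | _ a b
    rcases hcover he with ha | hb
    · exact ⟨a, Sym2.mem_mk_left a b, ha⟩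
    · exact ⟨b, Sym2.mem_mk_right a b, hb⟩
  obtain ⟨f, hf, haf⟩ := Set.mem_iUnion₂.1 (hverts ▸ haM)
  exact ⟨f, hf, a, hae, haf⟩

theorem Equimatchable.ncard_verts_eq_s5 [Finite V] (hG : Equimatchable G) {M₁ M₂ : G.Subgraph}
    (hM₁ : M₁.IsMatching) (hM₂ : M₂.IsMatching) (hcover₁ : G.IsVertexCover M₁.verts)
    (hcover₂ : G.IsVertexCover M₂.verts) : M₁.verts.ncard = M₂.verts.ncard := by
  obtain ⟨N₁, hN₁, hcard₁⟩ := exists_isMaximalMatching_of_isVertexCover hM₁ hcover₁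
  obtain ⟨N₂, hN₂, hcard₂⟩ := exists_isMaximalMatching_of_isVertexCover hM₂ hcover₂
  rw [hcard₁, hcard₂, hG N₁ N₂ hN₁ hN₂]

end Equimatchable

section Split

variable {G : SimpleGraph V} {K I : Finset V} {ι κ : Type*}

/-- The edges of `G` between `K` and `I`, as a relation from `K` to `I`. It is kept on the vertex
type, rather than on subtypes, so that its matchings and covers consist of vertices of `G`. -/
structure CrossAdj (G : SimpleGraph V) (K I : Finset V) (a b : V) : Prop where
  mem_left : a ∈ K
  mem_right : b ∈ I
  adj : G.Adj a b

theorem isVertexCover_of_isIndepSet [Fintype V] [DecidableEq V] (hcover : K ∪ I = univ)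
    (hindep : IsIndepSet G (I : Set V)) : G.IsVertexCover (K : Set V) := by
  have hmemI {a : V} (ha : a ∉ K) : a ∈ I :=
    (mem_union.1 (hcover ▸ mem_univ a)).resolve_left ha
  intro a b hab
  by_contra! h
  exact hindep (hmemI h.1) (hmemI h.2) hab.ne hab

theorem crossAdj_of_adj (hcover : G.IsVertexCover (K : Set V)) (hdisj : Disjoint K I) {a b : V}
    (hb : b ∈ I) (hab : G.Adj a b) : CrossAdj G K I a b :=
  ⟨(hcover hab).resolve_right (disjoint_right.1 hdisj hb), hb, hab⟩

theorem IsRelMatching.disjoint_range {x y : ι → V} (h : IsRelMatching (CrossAdj G K I) x y)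
    (hdisj : Disjoint K I) : Disjoint (K : Set V) (Set.range y) := by
  rw [Set.disjoint_right, Set.forall_mem_range]
  exact fun i ↦ disjoint_right.1 hdisj (h.rel i).mem_right

theorem IsRelMatching.ncard_union_range [Finite ι] {x y : ι → V}
    (h : IsRelMatching (CrossAdj G K I) x y) (hdisj : Disjoint K I) :
    (K ∪ Set.range y : Set V).ncard = #K + Nat.card ι := by
  rw [Set.ncard_union_eq (h.disjoint_range hdisj) K.finite_toSet (Set.finite_range y),
    Set.ncard_coe_finset, ← Nat.card_coe_set_eq, Nat.card_range_of_injective h.injective_right]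

theorem IsRelMatching.exists_isMatching_verts_eq [Finite ι] {x y : ι → V}
    (h : IsRelMatching (CrossAdj G K I) x y) (hclique : G.IsClique (K : Set V))
    (hdisj : Disjoint K I) (heven : Even (#K + Nat.card ι)) :
    ∃ M : G.Subgraph, M.IsMatching ∧ M.verts = (K ∪ Set.range y : Set V) := by
  have hxK : Set.range x ⊆ K := Set.range_subset_iff.2 fun i ↦ (h.rel i).mem_left
  have hKy := h.disjoint_range hdisj
  obtain ⟨M₁, hverts₁, hM₁⟩ := SimpleGraph.Subgraph.IsMatching.exists_of_disjoint_sets_of_equiv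
    (G := G) (hKy.mono_left hxK)
    ((Equiv.ofInjective x h.injective_left).symm.trans (Equiv.ofInjective y h.injective_right))
    (by rintro ⟨_, i, rfl⟩; simpa using (h.rel i).adj)
  have hrest : Even (Nat.card ↑(K \ Set.range x : Set V)) := by
    have hcard := Set.ncard_sdiff_add_ncard_of_subset hxK K.finite_toSet
    rw [Set.ncard_coe_finset, ← Nat.card_coe_set_eq (Set.range x),
      Nat.card_range_of_injective h.injective_left] at hcard
    rw [Nat.card_coe_set_eq]
    grind
  obtain ⟨M₂, hverts₂, hM₂⟩ := ((hclique.subset Set.sdiff_subset).even_iff_exists_isMatching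
    (K.finite_toSet.sdiff)).1 hrest
  refine ⟨M₁ ⊔ M₂, hM₁.sup hM₂ ?_, ?_⟩
  · rw [hM₁.support_eq_verts, hM₂.support_eq_verts, hverts₁, hverts₂, Set.disjoint_union_left]
    exact ⟨Set.disjoint_sdiff_right, (hKy.mono_left Set.sdiff_subset).symm⟩
  · rw [SimpleGraph.Subgraph.verts_sup, hverts₁, hverts₂, Set.union_right_comm,
      Set.union_sdiff_cancel hxK]

theorem IsRelCover.neighborSet_eq_singleton {k l b : V}
    (h : IsRelCover (CrossAdj G K I) {k} {l}) (hI : ∀ a, G.Adj a b → CrossAdj G K I a b)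
    (hb : ∃ a, G.Adj a b) (hbl : b ≠ l) : G.neighborSet b = {k} := by
  have hk {a : V} (hab : G.Adj a b) : a = k :=
    mem_singleton.1 ((h (hI a hab)).resolve_right (notMem_singleton.2 hbl))
  obtain ⟨a, hab⟩ := hb
  ext c
  exact ⟨fun hbc ↦ hk hbc.symm, fun hck ↦ hck ▸ hk hab ▸ hab.symm⟩

theorem IsRelCover.sdiff_singleton_subset_neighborSet {k l : V}
    (h : IsRelCover (CrossAdj G K I) {k} {l}) (hK : ∀ a ∈ K, ∃ b, CrossAdj G K I a b) :
    (K : Set V) \ {k} ⊆ G.neighborSet l := by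
  rintro a ⟨haK, hak⟩
  obtain ⟨b, hab⟩ := hK a haK
  obtain rfl : b = l := mem_singleton.1 ((h hab).resolve_left (notMem_singleton.2 hak))
  exact hab.adj.symm

namespace Equimatchable

theorem card_eq_of_isRelMatching [Finite V] [Finite ι] [Finite κ] (hG : Equimatchable G)
    (hclique : G.IsClique (K : Set V)) (hcover : G.IsVertexCover (K : Set V))
    (hdisj : Disjoint K I) {x y : ι → V} {x' y' : κ → V}
    (h : IsRelMatching (CrossAdj G K I) x y) (h' : IsRelMatching (CrossAdj G K I) x' y')
    (heven : Even (#K + Nat.card ι)) (heven' : Even (#K + Nat.card κ)) :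
    Nat.card ι = Nat.card κ := by
  obtain ⟨M, hM, hverts⟩ := h.exists_isMatching_verts_eq hclique hdisj heven
  obtain ⟨M', hM', hverts'⟩ := h'.exists_isMatching_verts_eq hclique hdisj heven'
  have hcard := hG.ncard_verts_eq_s5 hM hM' (hcover.subset (hverts ▸ Set.subset_union_left))
    (hcover.subset (hverts' ▸ Set.subset_union_left))
  rw [hverts, hverts', h.ncard_union_range hdisj, h'.ncard_union_range hdisj] at hcard
  exact Nat.add_left_cancel hcard

theorem card_le_of_isRelMatching [Finite V] [Finite ι] (hG : Equimatchable G)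
    (hclique : G.IsClique (K : Set V)) (hcover : G.IsVertexCover (K : Set V))
    (hdisj : Disjoint K I) {x y : ι → V} (h : IsRelMatching (CrossAdj G K I) x y) :
    Nat.card ι ≤ 1 + #K % 2 := by
  by_contra! hlt
  let e {t : ℕ} (ht : t ≤ Nat.card ι) : Fin t ↪ ι :=
    (Fin.castLEEmb ht).trans (Finite.equivFin ι).symm.toEmbedding
  have hcard := hG.card_eq_of_isRelMatching hclique hcover hdisj
    (h.comp (e (t := #K % 2) (by lia))) (h.comp (e (t := #K % 2 + 2) (by lia)))
    (by rw [Nat.card_fin]; grind) (by rw [Nat.card_fin]; grind)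
  simp at hcard

theorem odd_card_of_crossAdj [Finite V] (hG : Equimatchable G)
    (hclique : G.IsClique (K : Set V)) (hcover : G.IsVertexCover (K : Set V))
    (hdisj : Disjoint K I) {a a' b b' : V} (h : CrossAdj G K I a b) (h' : CrossAdj G K I a' b')
    (ha : a ≠ a') (hb : b ≠ b') : Odd #K := by
  have hcard := hG.card_le_of_isRelMatching hclique hcover hdisj (.pair h h' ha hb)
  rw [Nat.card_fin] at hcard
  grind

theorem exists_neighborSet_eq_singleton_and_sdiff_subset [Finite V] (hG : Equimatchable G)
    (hclique : G.IsClique (K : Set V)) (hcover : G.IsVertexCover (K : Set V))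
    (hdisj : Disjoint K I) (hK : ∀ a ∈ K, ∃ b, CrossAdj G K I a b)
    (hI : ∀ b ∈ I, ∃ a, CrossAdj G K I a b) (hK3 : 3 ≤ #K) (hI3 : 3 ≤ #I) :
    ∃ k l, (∀ b ∈ I, b ≠ l → G.neighborSet b = {k}) ∧ (K : Set V) \ {k} ⊆ G.neighborSet l := by
  obtain ⟨C, D, x, y, hCD, hxy⟩ := exists_isRelCover_isRelMatching (CrossAdj G K I)
  have hcard := hG.card_le_of_isRelMatching hclique hcover hdisj hxy
  rw [Nat.card_sum, Nat.card_eq_finsetCard, Nat.card_eq_finsetCard] at hcard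
  obtain ⟨k, l, hkl⟩ := hCD.exists_singletons (by lia) hK hI hK3 hI3
  exact ⟨k, l, fun b hb ↦ hkl.neighborSet_eq_singleton (fun _ ↦ crossAdj_of_adj hcover hdisj hb)
    ((hI b hb).imp fun _ h ↦ h.adj), hkl.sdiff_singleton_subset_neighborSet hK⟩

end Equimatchable

end Split

theorem stmt_5 {V : Type*} [Fintype V] [DecidableEq V]
    (G : SimpleGraph V) [DecidableRel G.Adj]
    (hNoIso : ∀ v : V, ∃ w : V, G.Adj v w)
    (K I : Finset V)
    (hdisj : Disjoint K I) (hcover : K ∪ I = Finset.univ)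
    (hclique : G.IsClique (K : Set V)) (hindep : IsIndepSet G (I : Set V))
    (hKI : ∀ k ∈ K, ∃ i ∈ I, G.Adj k i)
    (hEq : Equimatchable G) (hI3 : 3 ≤ I.card) (hK2 : 2 ≤ K.card)
    (v : V) (i : V) (hv : v ∈ K) (hi : i ∈ I) (hvi : ¬ G.Adj v i) :
    ∀ j ∈ I, G.Adj v j →
      (G.neighborSet j = (K : Set V) \ G.neighborSet i ∨
        G.neighborSet j = (K : Set V)) := by
  intro j hj hvj
  have hKcover := isVertexCover_of_isIndepSet hcover hindep
  have hcross {a b : V} (hb : b ∈ I) : G.Adj a b → CrossAdj G K I a b :=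
    crossAdj_of_adj hKcover hdisj hb
  have hK : ∀ a ∈ K, ∃ b, CrossAdj G K I a b := fun a ha ↦
    (hKI a ha).imp fun _ hb ↦ ⟨ha, hb.1, hb.2⟩
  have hI : ∀ b ∈ I, ∃ a, CrossAdj G K I a b := fun b hb ↦
    (hNoIso b).imp fun _ hba ↦ hcross hb hba.symm
  obtain ⟨x, hxi⟩ := hI i hi
  have hvx : v ≠ x := fun h ↦ hvi (h ▸ hxi.adj)
  have hji : j ≠ i := fun h ↦ hvi (h ▸ hvj)
  have hodd : Odd #K :=
    hEq.odd_card_of_crossAdj hclique hKcover hdisj (hcross hj hvj) hxi hvx hji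
  obtain ⟨k, l, hstar, hcenter⟩ := hEq.exists_neighborSet_eq_singleton_and_sdiff_subset
    hclique hKcover hdisj hK hI (by grind) hI3
  obtain rfl | hil := eq_or_ne i l
  · have hne : ((K : Set V) \ G.neighborSet i).Nonempty := ⟨v, hv, fun h ↦ hvi h.symm⟩
    have hdiff : (K : Set V) \ G.neighborSet i = {k} :=
      hne.subset_singleton_iff.1 (Set.sdiff_subset_comm.1 hcenter)
    exact .inl ((hstar j hj hji).trans hdiff.symm)
  · have hNi : G.neighborSet i = {k} := hstar i hi hil
    have hvk : v ∉ ({k} : Set V) := hNi ▸ fun h ↦ hvi h.symm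
    obtain rfl : j = l := by_contra fun hjl ↦ hvk (hstar j hj hjl ▸ hvj.symm)
    rw [hNi]
    exact (Set.sdiff_singleton_wcovBy _ k).eq_or_eq hcenter fun a ha ↦
      (hcross hj ha.symm).mem_left
end

section
/- Let G be a finite simple undirected graph on n ≥ 4 vertices with no isolated vertices, let r be the number of vertices of G of degree 1 and p the number of vertices of degree n − 1. Then G is an equimatchable split graph if and only if at least one of the following holds: (i) p = n; (ii) r = n − 1 and p = 1; (iii) p = 1, r ≥ 2, n − r is even, and every vertex has degree 1, n − r − 1, or n − 1; (iv) p = 0, r ≥ 2, n − r is even, and there exist non-adjacent vertices x and y with d(x) = n − 2 and d(y) = n − r − 2 such that every vertex other than x and y has degree 1 or n − r − 1; (v) n is odd and there exist two vertices x and y with d(x) + d(y) = p + n − 2 such that every vertex other than x and y has degree n − 1 or n − 2. -/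
open Finset

variable {V : Type*}

/-!
Matchings enter only through the sets of vertices they cover: `G` is equimatchable if and only if
all maximal matchings cover equally many vertices. Let `K` be an inclusion-maximal clique whose
complement is independent. A matching of `k` edges between `K` and its complement extends, by edges
inside `K`, to a maximal matching covering `k + #K` vertices as soon as this number is even. So if
`G` is equimatchable, only one `k` of the parity of `#K` can occur: for even `#K` there are no two
disjoint crossing edges, and for odd `#K` there are no three, as there is one. Unless `G` is
complete, this forces either all vertices outside an even set to be pendant at one common vertex
(`IsPendantCore`), or `G` to have odd order and consist of a clique and two non-adjacent vertices
dominating it (`IsDominatingPair`). Conversely, maximal matchings of such graphs cover nearly equal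
numbers of vertices, and these are even, hence equal. The cases (i)-(v) are these structures read
off from the degrees.
-/

section MatchedSets

variable {G : SimpleGraph V} {M : Finset (Sym2 V)} {S T : Finset V}

/-- `S` is the set of vertices covered by some matching of `G`. Matchings are taken as subgraphs
here, so that the constructions of `SimpleGraph.Subgraph.IsMatching` apply. -/
def IsMatchedSet (G : SimpleGraph V) (S : Finset V) : Prop :=
  ∃ H : G.Subgraph, H.verts = S ∧ H.IsMatching

/-- `S` is the set of vertices covered by some maximal matching of `G`: a matching is maximal
precisely when the vertices it leaves uncovered are independent. -/
structure IsMaximalMatchedSet (G : SimpleGraph V) (S : Finset V) : Prop where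
  isMatchedSet : IsMatchedSet G S
  isIndepSet_compl : IsIndepSet G (S : Set V)ᶜ

/-- The set of vertices covered by a finite set of edges. -/
def coveredVerts [DecidableEq V] (M : Finset (Sym2 V)) : Finset V :=
  M.biUnion Sym2.toFinset

lemma mem_coveredVerts [DecidableEq V] {v : V} : v ∈ coveredVerts M ↔ ∃ e ∈ M, v ∈ e := by
  simp [coveredVerts]

lemma IsMatching.card_coveredVerts [DecidableEq V] (hM : IsMatching G M) :
    #(coveredVerts M) = 2 * #M := by
  rw [coveredVerts, card_biUnion, sum_const_nat (m := 2), mul_comm]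
  · exact fun e he ↦ Sym2.card_toFinset_of_not_isDiag e (G.not_isDiag_of_mem_edgeSet (hM.1 he))
  · intro e he f hf hef
    simpa [disjoint_left] using hM.2 e he f hf hef

lemma isMaximalMatching_iff [DecidableEq V] :
    IsMaximalMatching G M ↔ IsMatching G M ∧ IsIndepSet G (coveredVerts M : Set V)ᶜ := by
  refine and_congr_right fun _ ↦ ⟨fun hmax a ha b hb _ hab ↦ ?_, fun hind e ↦ ?_⟩
  · obtain ⟨f, hf, v, hv, hvf⟩ := hmax s(a, b) hab
    have hcov : v ∈ coveredVerts M := mem_coveredVerts.mpr ⟨f, hf, hvf⟩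
    rcases Sym2.mem_iff.mp hv with rfl | rfl
    exacts [ha hcov, hb hcov]
  · induction e with | _ a b
    intro hab
    by_contra! hdisj
    have huncovered : ∀ v ∈ s(a, b), v ∉ coveredVerts M := fun v hv hcov ↦ by
      obtain ⟨f, hf, hvf⟩ := mem_coveredVerts.mp hcov
      exact hdisj f hf v hv hvf
    exact hind (huncovered a (by simp)) (huncovered b (by simp)) (G.ne_of_adj hab) hab

lemma isMatchedSet_iff [DecidableEq V] :
    IsMatchedSet G S ↔ ∃ M, IsMatching G M ∧ coveredVerts M = S := by
  classical
  constructor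
  · rintro ⟨H, hverts, hH⟩
    have mem_filter_iff (e : Sym2 V) : e ∈ S.sym2.filter (· ∈ H.edgeSet) ↔ e ∈ H.edgeSet := by
      simp only [mem_filter, mem_sym2_iff, and_iff_right_iff_imp]
      exact fun he v hv ↦ mem_coe.mp (hverts ▸ H.mem_verts_of_mem_edge he hv)
    refine ⟨S.sym2.filter (· ∈ H.edgeSet), ⟨fun e he ↦ ?_, fun e he f hf hef v hve hvf ↦ ?_⟩, ?_⟩
    · exact H.edgeSet_subset ((mem_filter_iff e).mp he)
    · obtain ⟨a, rfl⟩ := Sym2.mem_iff_exists.mp hve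
      obtain ⟨b, rfl⟩ := Sym2.mem_iff_exists.mp hvf
      rw [mem_filter_iff] at he hf
      obtain rfl : a = b := hH.eq_of_adj_left (u := v) he hf
      exact hef rfl
    · ext v
      have hv : v ∈ S ↔ v ∈ H.verts := by rw [hverts, mem_coe]
      simp only [mem_coveredVerts, mem_filter_iff, hv, hH.verts_eq_biUnion_edgeSet,
        Set.mem_iUnion, exists_prop, SetLike.mem_coe]
  · rintro ⟨M, hM, rfl⟩
    refine ⟨{ verts := coveredVerts M
              Adj := fun a b ↦ s(a, b) ∈ M
              adj_sub := fun h ↦ hM.1 h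
              edge_vert := fun h ↦ mem_coveredVerts.mpr ⟨_, h, by simp⟩
              symm := ⟨fun a b h ↦ by rwa [Sym2.eq_swap]⟩ }, rfl, fun v hv ↦ ?_⟩
    obtain ⟨e, he, hve⟩ := mem_coveredVerts.mp hv
    obtain ⟨w, rfl⟩ := Sym2.mem_iff_exists.mp hve
    refine ⟨w, he, fun w' hw' ↦ ?_⟩
    by_contra hne
    exact hM.2 _ hw' _ he (mt Sym2.congr_right.mp hne) v (by simp) hve

theorem equimatchable_iff_card_eq : Equimatchable G ↔
    ∀ S T, IsMaximalMatchedSet G S → IsMaximalMatchedSet G T → #S = #T := by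
  classical
  constructor
  · rintro h S T ⟨hS, hS'⟩ ⟨hT, hT'⟩
    obtain ⟨M, hM, rfl⟩ := isMatchedSet_iff.mp hS
    obtain ⟨N, hN, rfl⟩ := isMatchedSet_iff.mp hT
    rw [hM.card_coveredVerts, hN.card_coveredVerts,
      h M N (isMaximalMatching_iff.mpr ⟨hM, hS'⟩) (isMaximalMatching_iff.mpr ⟨hN, hT'⟩)]
  · intro h M N hM hN
    rw [isMaximalMatching_iff] at hM hN
    have hcard := h _ _ ⟨isMatchedSet_iff.mpr ⟨M, hM.1, rfl⟩, hM.2⟩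
      ⟨isMatchedSet_iff.mpr ⟨N, hN.1, rfl⟩, hN.2⟩
    rw [hM.1.card_coveredVerts, hN.1.card_coveredVerts] at hcard
    lia

lemma IsMatchedSet.even_card (hS : IsMatchedSet G S) : Even #S := by
  classical
  obtain ⟨M, hM, rfl⟩ := isMatchedSet_iff.mp hS
  simp [hM.card_coveredVerts]

lemma IsMatchedSet.exists_mem_adj (hS : IsMatchedSet G S) {a : V} (ha : a ∈ S) :
    ∃ w ∈ S, G.Adj a w := by
  obtain ⟨H, hverts, hH⟩ := hS
  obtain ⟨w, haw, -⟩ := hH (hverts ▸ mem_coe.mpr ha)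
  exact ⟨w, mem_coe.mp (hverts ▸ haw.snd_mem), haw.adj_sub⟩

lemma IsMatchedSet.eq_of_forall_adj_eq (hS : IsMatchedSet G S) {a b x : V} (ha : a ∈ S)
    (hb : b ∈ S) (hax : ∀ w, G.Adj a w → w = x) (hbx : ∀ w, G.Adj b w → w = x) : a = b := by
  obtain ⟨H, hverts, hH⟩ := hS
  obtain ⟨v, hav, -⟩ := hH (hverts ▸ mem_coe.mpr ha)
  obtain ⟨w, hbw, -⟩ := hH (hverts ▸ mem_coe.mpr hb)
  obtain rfl := hax v hav.adj_sub
  obtain rfl := hbx w hbw.adj_sub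
  exact hH.eq_of_adj_right hav hbw

lemma IsMatchedSet.union [DecidableEq V] (hS : IsMatchedSet G S) (hT : IsMatchedSet G T)
    (hST : Disjoint S T) : IsMatchedSet G (S ∪ T) := by
  obtain ⟨H, hHS, hH⟩ := hS
  obtain ⟨J, hJT, hJ⟩ := hT
  refine ⟨H ⊔ J, by simp [hHS, hJT], hH.sup hJ ?_⟩
  rwa [hH.support_eq_verts, hJ.support_eq_verts, hHS, hJT, disjoint_coe]

lemma isMatchedSet_of_isClique (hS : G.IsClique (S : Set V)) (heven : Even #S) :
    IsMatchedSet G S :=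
  (hS.even_iff_exists_isMatching S.finite_toSet).mp (by rwa [Set.ncard_coe_finset])

lemma equimatchable_of_card_le_add_one (m : ℕ)
    (h : ∀ S, IsMaximalMatchedSet G S → m ≤ #S ∧ #S ≤ m + 1) : Equimatchable G := by
  rw [equimatchable_iff_card_eq]
  intro S T hS hT
  obtain ⟨i, hi⟩ := hS.isMatchedSet.even_card
  obtain ⟨j, hj⟩ := hT.isMatchedSet.even_card
  have := h S hS
  have := h T hT
  lia

end MatchedSets

section SplitPartitions

variable {G : SimpleGraph V} {K : Finset V}

/-- The finite set `K` is a clique of `G` and its complement is independent: the clique side of a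
partition witnessing that `G` is split. -/
structure IsSplitPartition (G : SimpleGraph V) (K : Finset V) : Prop where
  isClique : G.IsClique (K : Set V)
  isIndepSet_compl : IsIndepSet G (K : Set V)ᶜ

lemma IsSplitPartition.isSplitGraph (hK : IsSplitPartition G K) : IsSplitGraph G :=
  ⟨K, (K : Set V)ᶜ, disjoint_compl_right, Set.union_compl_self _, hK.isClique,
    hK.isIndepSet_compl⟩

lemma IsSplitGraph.exists_isSplitPartition [Finite V] (hG : IsSplitGraph G) :
    ∃ K, IsSplitPartition G K := by
  obtain ⟨K, I, hdisj, hunion, hK, hI⟩ := hG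
  obtain rfl : I = Kᶜ := (IsCompl.of_eq hdisj.inter_eq hunion).compl_eq.symm
  lift K to Finset V using K.toFinite
  exact ⟨K, hK, hI⟩

lemma IsSplitPartition.mem_of_adj (hK : IsSplitPartition G K) {u w : V} (hu : u ∉ K)
    (huw : G.Adj u w) : w ∈ K := by
  by_contra hw
  exact hK.isIndepSet_compl hu hw huw.ne huw

lemma IsSplitGraph.exists_maximal_isSplitPartition [Finite V] (hG : IsSplitGraph G) :
    ∃ K, IsSplitPartition G K ∧ ∀ u ∉ K, ∃ w ∈ K, ¬ G.Adj u w := by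
  classical
  obtain ⟨K, hK⟩ := Set.Finite.exists_maximal (Set.toFinite {K | IsSplitPartition G K})
    hG.exists_isSplitPartition
  refine ⟨K, hK.prop, fun u hu ↦ ?_⟩
  by_contra! hadj
  have hinsert : IsSplitPartition G (insert u K) := by
    refine ⟨?_, hK.prop.isIndepSet_compl.mono ?_⟩
    · rw [coe_insert]
      exact hK.prop.isClique.insert fun w hw _ ↦ hadj w hw
    · exact Set.compl_subset_compl.mpr (coe_subset.mpr (subset_insert u K))
  exact hu (hK.le_of_ge hinsert (subset_insert u K) (mem_insert_self u K))

end SplitPartitions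

section Sufficiency

variable {G : SimpleGraph V} {S W : Finset V} {u x y : V}

lemma IsIndepSet.card_le_one_of_isClique (hind : IsIndepSet G (S : Set V))
    (hclique : G.IsClique (S : Set V)) : #S ≤ 1 :=
  card_le_one.mpr fun a ha b hb ↦ by
    by_contra hab
    exact hind ha hb hab (hclique ha hb hab)

lemma equimatchable_top [Finite V] : Equimatchable (⊤ : SimpleGraph V) := by
  classical
  cases nonempty_fintype V
  refine equimatchable_of_card_le_add_one (Fintype.card V - 1) fun S hS ↦ ?_
  have huncovered : #Sᶜ ≤ 1 := IsIndepSet.card_le_one_of_isClique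
    (by simpa using hS.isIndepSet_compl) (SimpleGraph.IsClique.top _)
  have := card_compl_add_card S
  lia

lemma isSplitGraph_top : IsSplitGraph (⊤ : SimpleGraph V) :=
  ⟨Set.univ, ∅, by simp, by simp, SimpleGraph.IsClique.top _, Set.pairwise_empty _⟩

lemma adj_or_adj_of_subsingleton {v : V} (hxy : x ≠ y) (hvx : v ≠ x) (hvy : v ≠ y)
    (hsub : (Gᶜ.neighborSet v).Subsingleton) : G.Adj x v ∨ G.Adj y v := by
  by_contra! h
  exact hxy (hsub ⟨hvx, mt SimpleGraph.Adj.symm h.1⟩ ⟨hvy, mt SimpleGraph.Adj.symm h.2⟩)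

/-- `x` and `y` are non-adjacent, the other vertices form a clique, and each of them is adjacent
to `x` or to `y`. -/
structure IsDominatingPair (G : SimpleGraph V) (x y : V) : Prop where
  ne : x ≠ y
  not_adj : ¬ G.Adj x y
  isClique_compl : G.IsClique ({x, y} : Set V)ᶜ
  adj_or_adj : ∀ v, v ≠ x → v ≠ y → G.Adj x v ∨ G.Adj y v

lemma IsDominatingPair.symm (h : IsDominatingPair G x y) : IsDominatingPair G y x where
  ne := h.ne.symm
  not_adj := fun hyx ↦ h.not_adj hyx.symm
  isClique_compl := Set.pair_comm x y ▸ h.isClique_compl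
  adj_or_adj := fun v hvy hvx ↦ (h.adj_or_adj v hvx hvy).symm

lemma IsDominatingPair.subsingleton (h : IsDominatingPair G x y) {v : V} (hvx : v ≠ x)
    (hvy : v ≠ y) : (Gᶜ.neighborSet v).Subsingleton := by
  have hor {w : V} (hw : Gᶜ.Adj v w) : w = x ∨ w = y := by
    by_contra hne
    exact hw.2 (h.isClique_compl (by simp [hvx, hvy]) hne hw.1)
  have hadj := h.adj_or_adj v hvx hvy
  intro a ha b hb
  have ha' := hor ha
  have hb' := hor hb
  rw [SimpleGraph.mem_neighborSet, SimpleGraph.compl_adj, G.adj_comm] at ha hb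
  grind

lemma IsDominatingPair.card_le_two (h : IsDominatingPair G x y)
    (hS : IsIndepSet G (S : Set V)) : #S ≤ 2 := by
  classical
  by_cases hxy : x ∈ S ∧ y ∈ S
  · have hsub : S ⊆ {x, y} := fun v hv ↦ by
      by_contra! hne
      simp only [mem_insert, mem_singleton, not_or] at hne
      rcases h.adj_or_adj v hne.1 hne.2 with hxv | hyv
      exacts [hS hxy.1 hv hxv.ne hxv, hS hxy.2 hv hyv.ne hyv]
    exact (card_le_card hsub).trans Finset.card_le_two
  · wlog hy : y ∉ S generalizing x y
    · exact this h.symm (by tauto) (by tauto)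
    have herase : #(S.erase x) ≤ 1 := by
      refine IsIndepSet.card_le_one_of_isClique (hS.mono (coe_subset.mpr (erase_subset x S)))
        (h.isClique_compl.subset fun v hv ↦ ?_)
      simp only [coe_erase, Set.mem_sdiff, mem_coe, Set.mem_singleton_iff] at hv
      simp only [Set.mem_compl_iff, Set.mem_insert_iff, Set.mem_singleton_iff, not_or]
      exact ⟨hv.2, ne_of_mem_of_not_mem hv.1 hy⟩
    have := pred_card_le_card_erase (a := x) (s := S)
    lia

theorem IsDominatingPair.equimatchable [Fintype V] (h : IsDominatingPair G x y)
    (hodd : Odd (Fintype.card V)) : Equimatchable G := by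
  classical
  refine equimatchable_of_card_le_add_one (Fintype.card V - 2) fun S hS ↦ ?_
  have huncovered : #Sᶜ ≤ 2 := h.card_le_two (by simpa using hS.isIndepSet_compl)
  have := card_compl_add_card S
  have := hS.isMatchedSet.even_card
  grind

lemma IsDominatingPair.isSplitGraph (h : IsDominatingPair G x y) : IsSplitGraph G := by
  refine ⟨{x, y}ᶜ, {x, y}, disjoint_compl_left, Set.compl_union_self _, h.isClique_compl, ?_⟩
  simpa [IsIndepSet, Set.pairwise_pair, G.adj_comm y x] using fun _ ↦ h.not_adj

/-- The vertices outside the even set `W` are all pendant at `x ∈ W`, the set `W \ {x}` is a clique,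
and `x` is adjacent to all other vertices with at most one exception. -/
structure IsPendantCore (G : SimpleGraph V) (W : Finset V) (x : V) : Prop where
  mem : x ∈ W
  even_card : Even #W
  isClique_diff : G.IsClique ((W : Set V) \ {x})
  adj_iff : ∀ u ∉ W, ∀ w, G.Adj u w ↔ w = x
  subsingleton : (Gᶜ.neighborSet x).Subsingleton

lemma IsPendantCore.adj_iff_of_mem (h : IsPendantCore G W x) {v w : V} (hv : v ∈ W)
    (hvx : v ≠ x) (hwx : w ≠ x) : G.Adj v w ↔ w ≠ v ∧ w ∈ W := by
  refine ⟨fun hvw ↦ ⟨hvw.ne', ?_⟩, fun ⟨hwv, hw⟩ ↦ h.isClique_diff ⟨hv, hvx⟩ ⟨hw, hwx⟩ hwv.symm⟩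
  by_contra hw
  exact hvx ((h.adj_iff w hw v).mp hvw.symm)

lemma IsPendantCore.eq_of_isUniversal [Fintype V] (h : IsPendantCore G W x)
    (hW : #W + 2 ≤ Fintype.card V) {v : V} (hv : G.IsUniversal v) : v = x := by
  classical
  have hcompl : 1 < #Wᶜ := by
    rw [card_compl]
    lia
  obtain ⟨u, hu, huv⟩ := exists_mem_ne hcompl v
  exact (h.adj_iff u (mem_compl.mp hu) v).mp (hv huv.symm).symm

lemma IsPendantCore.mem_of_not_adj (h : IsPendantCore G W x) (hxy : ¬ G.Adj x y) : y ∈ W := by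
  by_contra hy
  exact hxy ((h.adj_iff y hy x).mpr rfl).symm

lemma IsPendantCore.four_le_card (h : IsPendantCore G W x) (hxy : x ≠ y)
    (hnadj : ¬ G.Adj x y) (hy : ∃ w, G.Adj y w) : 4 ≤ #W := by
  have hyW : y ∈ W := h.mem_of_not_adj hnadj
  obtain ⟨w, hyw⟩ := hy
  have hwx : w ≠ x := fun hwx ↦ hnadj (hwx ▸ hyw).symm
  have hwW : w ∈ W := ((h.adj_iff_of_mem hyW hxy.symm hwx).mp hyw).2
  have := two_lt_card.mpr ⟨x, h.mem, y, hyW, w, hwW, hxy, hwx.symm, hyw.ne⟩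
  have := h.even_card
  grind

lemma IsPendantCore.mem_of_isMaximalMatchedSet (h : IsPendantCore G W x)
    (hS : IsMaximalMatchedSet G S) (hu : u ∉ W) : x ∈ S := by
  by_cases huS : u ∈ S
  · obtain ⟨w, hw, huw⟩ := hS.isMatchedSet.exists_mem_adj huS
    rwa [← (h.adj_iff u hu w).mp huw]
  · by_contra hx
    exact hS.isIndepSet_compl huS hx (ne_of_mem_of_not_mem h.mem hu).symm
      ((h.adj_iff u hu x).mpr rfl)

-- At most one vertex outside `W` is matched, to `x`, and at most one vertex of `W` is left
-- unmatched; since `#S` and `#W` are both even, both or neither happen.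
lemma IsPendantCore.card_eq (h : IsPendantCore G W x) (hS : IsMaximalMatchedSet G S)
    (hu : u ∉ W) : #S = #W := by
  classical
  have hx : x ∈ S := h.mem_of_isMaximalMatchedSet hS hu
  have houter : #(S \ W) ≤ 1 := card_le_one.mpr fun a ha b hb ↦ by
    rw [mem_sdiff] at ha hb
    exact hS.isMatchedSet.eq_of_forall_adj_eq ha.1 hb.1 (fun w ↦ (h.adj_iff a ha.2 w).mp)
      fun w ↦ (h.adj_iff b hb.2 w).mp
  have huncovered : #(W \ S) ≤ 1 := by
    refine IsIndepSet.card_le_one_of_isClique (hS.isIndepSet_compl.mono ?_)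
      (h.isClique_diff.subset ?_)
    · exact fun v hv ↦ (mem_sdiff.mp hv).2
    · exact fun v hv ↦ ⟨(mem_sdiff.mp hv).1, fun hvx ↦ (mem_sdiff.mp hv).2 (hvx ▸ hx)⟩
  have hSW := card_sdiff_add_card_inter S W
  have hWS := card_sdiff_add_card_inter W S
  rw [inter_comm] at hWS
  have := hS.isMatchedSet.even_card
  have := h.even_card
  grind

theorem IsPendantCore.equimatchable (h : IsPendantCore G W x) (hu : u ∉ W) : Equimatchable G :=
  equimatchable_iff_card_eq.mpr fun _ _ hS hT ↦ (h.card_eq hS hu).trans (h.card_eq hT hu).symm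

lemma IsPendantCore.isSplitGraph (h : IsPendantCore G W x) : IsSplitGraph G := by
  classical
  refine IsSplitPartition.isSplitGraph (K := W.filter fun v ↦ v = x ∨ G.Adj x v) ⟨?_, ?_⟩
  · intro a ha b hb hab
    rw [mem_coe, mem_filter] at ha hb
    rcases ha.2 with rfl | hxa
    · exact hb.2.resolve_left hab.symm
    rcases hb.2 with rfl | hxb
    · exact hxa.symm
    exact h.isClique_diff ⟨ha.1, hxa.ne'⟩ ⟨hb.1, hxb.ne'⟩ hab
  · have mem_of_adj {a b : V} (hb : b ∉ W.filter fun v ↦ v = x ∨ G.Adj x v)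
        (hadj : G.Adj a b) : a ∈ W := by
      by_contra ha
      obtain rfl := (h.adj_iff a ha b).mp hadj
      exact hb (mem_filter.mpr ⟨h.mem, .inl rfl⟩)
    have compl_adj {a : V} (haW : a ∈ W) (ha : a ∉ W.filter fun v ↦ v = x ∨ G.Adj x v) :
        Gᶜ.Adj x a := by
      simp only [mem_filter, haW, true_and, not_or] at ha
      exact ⟨Ne.symm ha.1, ha.2⟩
    intro a ha b hb hab hadj
    exact hab <| h.subsingleton (compl_adj (mem_of_adj hb hadj) ha)
      (compl_adj (mem_of_adj ha hadj.symm) hb)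

end Sufficiency

section CrossingMatchings

variable {G : SimpleGraph V} {K : Finset V} {k l : ℕ}

lemma isMatchedSet_image_union_image [DecidableEq V] {u v : Fin k → V} (hu : u.Injective)
    (hv : v.Injective) (hne : ∀ i j, u i ≠ v j) (huv : ∀ i, G.Adj (u i) (v i)) :
    IsMatchedSet G (univ.image u ∪ univ.image v) := by
  obtain ⟨H, hverts, hH⟩ := SimpleGraph.Subgraph.IsMatching.exists_of_disjoint_sets_of_equiv
    (G := G) (Set.disjoint_range_iff.mpr hne)
    ((Equiv.ofInjective u hu).symm.trans (Equiv.ofInjective v hv))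
    (by rintro ⟨_, i, rfl⟩; simpa using huv i)
  exact ⟨H, by simp [hverts], hH⟩

/-- `G` has a matching of `k` edges joining the complement of `K` to `K`, listed as the pairs
`u i`, `v i`. -/
def HasCrossingMatching (G : SimpleGraph V) (K : Finset V) (k : ℕ) : Prop :=
  ∃ u v : Fin k → V, u.Injective ∧ v.Injective ∧ ∀ i, u i ∉ K ∧ v i ∈ K ∧ G.Adj (u i) (v i)

lemma hasCrossingMatching_zero : HasCrossingMatching G K 0 :=
  ⟨Fin.elim0, Fin.elim0, Function.injective_of_subsingleton _,
    Function.injective_of_subsingleton _, fun i ↦ i.elim0⟩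

lemma hasCrossingMatching_one {u v : V} (hu : u ∉ K) (hv : v ∈ K) (huv : G.Adj u v) :
    HasCrossingMatching G K 1 :=
  ⟨![u], ![v], Function.injective_of_subsingleton _, Function.injective_of_subsingleton _,
    by simp [hu, hv, huv]⟩

lemma hasCrossingMatching_two {u₁ u₂ v₁ v₂ : V} (hu : [u₁, u₂].Nodup) (hv : [v₁, v₂].Nodup)
    (h₁ : u₁ ∉ K ∧ v₁ ∈ K ∧ G.Adj u₁ v₁) (h₂ : u₂ ∉ K ∧ v₂ ∈ K ∧ G.Adj u₂ v₂) :
    HasCrossingMatching G K 2 :=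
  ⟨![u₁, u₂], ![v₁, v₂], by simpa [← List.nodup_ofFn] using hu,
    by simpa [← List.nodup_ofFn] using hv, by simp [Fin.forall_fin_two, h₁, h₂]⟩

lemma hasCrossingMatching_three {u₁ u₂ u₃ v₁ v₂ v₃ : V} (hu : [u₁, u₂, u₃].Nodup)
    (hv : [v₁, v₂, v₃].Nodup) (h₁ : u₁ ∉ K ∧ v₁ ∈ K ∧ G.Adj u₁ v₁)
    (h₂ : u₂ ∉ K ∧ v₂ ∈ K ∧ G.Adj u₂ v₂) (h₃ : u₃ ∉ K ∧ v₃ ∈ K ∧ G.Adj u₃ v₃) :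
    HasCrossingMatching G K 3 :=
  ⟨![u₁, u₂, u₃], ![v₁, v₂, v₃], by simpa [← List.nodup_ofFn] using hu,
    by simpa [← List.nodup_ofFn] using hv, by simp [Fin.forall_fin_succ, h₁, h₂, h₃]⟩

-- The part of the clique `K` missed by the crossing matching has even size, so it can be matched
-- internally.
lemma IsSplitPartition.exists_isMaximalMatchedSet (hK : IsSplitPartition G K)
    (hk : HasCrossingMatching G K k) (heven : Even (k + #K)) :
    ∃ S, IsMaximalMatchedSet G S ∧ #S = k + #K := by
  classical
  obtain ⟨u, v, hu, hv, huv⟩ := hk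
  have hvK : univ.image v ⊆ K := image_subset_iff.mpr fun i _ ↦ (huv i).2.1
  have huK : Disjoint (univ.image u) K := by simpa [disjoint_left] using fun i ↦ (huv i).1
  have hrest : IsMatchedSet G (K \ univ.image v) := by
    refine isMatchedSet_of_isClique (hK.isClique.subset (coe_subset.mpr sdiff_subset)) ?_
    have := card_sdiff_add_card_eq_card hvK
    rw [card_image_of_injective _ hv, card_fin] at this
    grind
  have hcross := isMatchedSet_image_union_image hu hv
    (fun i j ↦ (ne_of_mem_of_not_mem (huv j).2.1 (huv i).1).symm) fun i ↦ (huv i).2.2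
  have hmatched := hcross.union hrest <|
    disjoint_union_left.mpr ⟨huK.mono_right sdiff_subset, disjoint_sdiff⟩
  rw [union_assoc, union_sdiff_of_subset hvK] at hmatched
  refine ⟨_, ⟨hmatched, hK.isIndepSet_compl.mono ?_⟩, ?_⟩
  · exact Set.compl_subset_compl.mpr (coe_subset.mpr subset_union_right)
  · rw [card_union_of_disjoint huK, card_image_of_injective _ hu, card_fin]

lemma Equimatchable.crossingMatching_unique (hG : Equimatchable G) (hK : IsSplitPartition G K)
    (hk : HasCrossingMatching G K k) (hl : HasCrossingMatching G K l)
    (hk_even : Even (k + #K)) (hl_even : Even (l + #K)) : k = l := by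
  obtain ⟨S, hS, hS_card⟩ := hK.exists_isMaximalMatchedSet hk hk_even
  obtain ⟨T, hT, hT_card⟩ := hK.exists_isMaximalMatchedSet hl hl_even
  have := equimatchable_iff_card_eq.mp hG S T hS hT
  lia

lemma Equimatchable.not_hasCrossingMatching_two (hG : Equimatchable G)
    (hK : IsSplitPartition G K) (heven : Even #K) : ¬ HasCrossingMatching G K 2 := fun h ↦ by
  have := hG.crossingMatching_unique hK hasCrossingMatching_zero h (by simpa) (by grind)
  lia

lemma Equimatchable.not_hasCrossingMatching_three (hG : Equimatchable G)
    (hK : IsSplitPartition G K) (hodd : Odd #K) (hone : HasCrossingMatching G K 1) :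
    ¬ HasCrossingMatching G K 3 := fun h ↦ by
  have := hG.crossingMatching_unique hK hone h (by grind) (by grind)
  lia

-- If `w` had no neighbour outside `K`, then matching `K \ {w}` internally would be maximal, while
-- one crossing edge extends to a maximal matching covering `#K + 1` vertices.
lemma Equimatchable.exists_notMem_adj (hG : Equimatchable G) (hK : IsSplitPartition G K)
    (hodd : Odd #K) (hone : HasCrossingMatching G K 1) {w : V} (hw : w ∈ K) :
    ∃ u ∉ K, G.Adj u w := by
  classical
  by_contra! hnot
  have herase : IsMaximalMatchedSet G (K.erase w) := by
    refine ⟨isMatchedSet_of_isClique (hK.isClique.subset (coe_subset.mpr (erase_subset w K))) ?_,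
      fun a ha b hb hab hadj ↦ ?_⟩
    · rw [card_erase_of_mem hw]
      grind
    · simp only [coe_erase, Set.mem_compl_iff, Set.mem_sdiff, mem_coe, Set.mem_singleton_iff,
        not_and, not_not] at ha hb
      by_cases haK : a ∈ K
      · obtain rfl := ha haK
        exact hnot b (fun hbK ↦ hab (hb hbK).symm) hadj.symm
      · obtain rfl := hb (hK.mem_of_adj haK hadj)
        exact hnot a haK hadj
  obtain ⟨S, hS, hS_card⟩ := hK.exists_isMaximalMatchedSet hone (by grind)
  have := equimatchable_iff_card_eq.mp hG _ S herase hS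
  have := card_erase_le (a := w) (s := K)
  lia

end CrossingMatchings

section Necessity

variable {G : SimpleGraph V} {K : Finset V}

lemma card_add_two_le [Fintype V] {u v : V} (hu : u ∉ K) (hv : v ∉ K) (huv : u ≠ v) :
    #K + 2 ≤ Fintype.card V := by
  classical
  have hcard := card_insert_of_notMem (s := insert v K) (a := u) (by simp [huv, hu])
  rw [card_insert_of_notMem hv] at hcard
  exact hcard ▸ card_le_univ _

lemma IsSplitPartition.eq_top_of_forall_mem (hK : IsSplitPartition G K) (hall : ∀ v, v ∈ K) :
    G = ⊤ :=
  SimpleGraph.eq_top_iff_forall_ne_adj.mpr fun a b ↦ hK.isClique (hall a) (hall b)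

lemma Equimatchable.exists_isPendantCore_of_even (hG : Equimatchable G) (hK : IsSplitPartition G K)
    (hNoIso : ∀ v, ∃ w, G.Adj v w) (heven : Even #K) {u₀ u₁ : V} (hu₀ : u₀ ∉ K) (hu₁ : u₁ ∉ K)
    (hne : u₀ ≠ u₁) : ∃ x, IsPendantCore G K x := by
  have adj_unique {u u' w w' : V} (hu : u ∉ K) (hu' : u' ∉ K) (huu' : u ≠ u')
      (huw : G.Adj u w) (huw' : G.Adj u' w') : w = w' := by
    by_contra hww'
    exact hG.not_hasCrossingMatching_two hK heven <|
      hasCrossingMatching_two (by simpa) (by simpa) ⟨hu, hK.mem_of_adj hu huw, huw⟩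
        ⟨hu', hK.mem_of_adj hu' huw', huw'⟩
  obtain ⟨x, hx⟩ := hNoIso u₀
  have eq_of_adj {u w : V} (hu : u ∉ K) (huw : G.Adj u w) : w = x := by
    rcases eq_or_ne u u₀ with rfl | huu₀
    · obtain ⟨w', hw'⟩ := hNoIso u₁
      exact (adj_unique hu hu₁ hne huw hw').trans (adj_unique hu hu₁ hne hx hw').symm
    · exact adj_unique hu hu₀ huu₀ huw hx
  have adj_apex {u : V} (hu : u ∉ K) : G.Adj u x := by
    obtain ⟨w, huw⟩ := hNoIso u
    exact eq_of_adj hu huw ▸ huw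
  have hxK : x ∈ K := hK.mem_of_adj hu₀ hx
  refine ⟨x, hxK, heven, hK.isClique.subset Set.sdiff_subset,
    fun u hu w ↦ ⟨eq_of_adj hu, fun hwx ↦ hwx ▸ adj_apex hu⟩, fun v hv ↦ ?_⟩
  rw [SimpleGraph.mem_neighborSet, SimpleGraph.compl_adj] at hv
  by_cases hvK : v ∈ K
  · exact absurd (hK.isClique hxK hvK hv.1) hv.2
  · exact absurd (adj_apex hvK).symm hv.2

lemma IsSplitPartition.isDominatingPair_of_compl_eq_singleton [Fintype V] [DecidableEq V]
    (hK : IsSplitPartition G K) {u w : V} (hcompl : Kᶜ = {u}) (hw : w ∈ K)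
    (hnadj : ¬ G.Adj u w) : IsDominatingPair G u w := by
  have mem_of_ne {v : V} (hv : v ≠ u) : v ∈ K := by
    by_contra hvK
    exact hv (mem_singleton.mp (hcompl ▸ mem_compl.mpr hvK))
  have huK : u ∉ K := mem_compl.mp (hcompl ▸ mem_singleton_self u)
  refine ⟨(ne_of_mem_of_not_mem hw huK).symm, hnadj, hK.isClique.subset fun v hv ↦ ?_,
    fun v hv hvw ↦ .inr (hK.isClique hw (mem_of_ne hv) hvw.symm)⟩
  exact mem_of_ne fun h ↦ hv (.inl h)

lemma Equimatchable.exists_cover (hG : Equimatchable G) (hK : IsSplitPartition G K)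
    (hmax : ∀ u ∉ K, ∃ w ∈ K, ¬ G.Adj u w) (hodd : Odd #K) {y c : V} (hy : y ∉ K)
    (hyc : G.Adj y c) : ∃ y' ∉ K, y ≠ y' ∧ ∀ w ∈ K, G.Adj y w ∨ G.Adj y' w := by
  have hcK : c ∈ K := hK.mem_of_adj hy hyc
  have hone : HasCrossingMatching G K 1 := hasCrossingMatching_one hy hcK hyc
  obtain ⟨w, hw, hyw⟩ := hmax y hy
  obtain ⟨y', hy', hy'w⟩ := hG.exists_notMem_adj hK hodd hone hw
  have hyy' : y ≠ y' := fun h ↦ hyw (h ▸ hy'w)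
  refine ⟨y', hy', hyy', fun z hz ↦ ?_⟩
  by_contra! hmiss
  obtain ⟨y'', hy'', hy''z⟩ := hG.exists_notMem_adj hK hodd hone hz
  have hyy'' : y ≠ y'' := fun h ↦ hmiss.1 (h ▸ hy''z)
  have hy'y'' : y' ≠ y'' := fun h ↦ hmiss.2 (h ▸ hy''z)
  have hcw : c ≠ w := fun h ↦ hyw (h ▸ hyc)
  have hcz : c ≠ z := fun h ↦ hmiss.1 (h ▸ hyc)
  have hwz : w ≠ z := fun h ↦ hmiss.2 (h ▸ hy'w)
  exact hG.not_hasCrossingMatching_three hK hodd hone <|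
    hasCrossingMatching_three (by simp [*]) (by simp [*]) ⟨hy, hcK, hyc⟩ ⟨hy', hw, hy'w⟩
      ⟨hy'', hz, hy''z⟩

lemma IsSplitPartition.eq_of_adj_of_cover (hK : IsSplitPartition G K)
    (hmax : ∀ u ∉ K, ∃ w ∈ K, ¬ G.Adj u w) (hthree : ¬ HasCrossingMatching G K 3)
    {y y' z a w : V} (hdistinct : [y, y', z].Nodup) (hy : y ∉ K) (hy' : y' ∉ K) (hz : z ∉ K)
    (hcover : ∀ w ∈ K, G.Adj y w ∨ G.Adj y' w) (hya : G.Adj y a) (hza : G.Adj z a)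
    (hyw : G.Adj y w) : w = a := by
  by_contra hwa
  have ⟨c, hc, hyc⟩ := hmax y hy
  have hy'c : G.Adj y' c := (hcover c hc).resolve_left hyc
  have hcw : c ≠ w := fun h ↦ hyc (h ▸ hyw)
  have hca : c ≠ a := fun h ↦ hyc (h ▸ hya)
  exact hthree <| hasCrossingMatching_three hdistinct (by simp [*, Ne.symm])
    ⟨hy, hK.mem_of_adj hy hyw, hyw⟩ ⟨hy', hc, hy'c⟩ ⟨hz, hK.mem_of_adj hz hza, hza⟩

lemma IsSplitPartition.eq_of_adj_of_forall_adj (hK : IsSplitPartition G K) (hodd : Odd #K)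
    (hthree : ¬ HasCrossingMatching G K 3) {y y' u a w : V} (hdistinct : [y, y', u].Nodup)
    (hy : y ∉ K) (hy' : y' ∉ K) (hu : u ∉ K) (hya : G.Adj y a)
    (hy'_adj : ∀ c ∈ K, c ≠ a → G.Adj y' c) (huw : G.Adj u w) : w = a := by
  classical
  by_contra hwa
  have haK : a ∈ K := hK.mem_of_adj hy hya
  have hwK : w ∈ K := hK.mem_of_adj hu huw
  obtain ⟨c, hc⟩ : ((K.erase a).erase w).Nonempty := by
    have hcard := card_erase_of_mem (mem_erase.mpr ⟨hwa, hwK⟩)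
    rw [card_erase_of_mem haK] at hcard
    have := one_lt_card.mpr ⟨w, hwK, a, haK, hwa⟩
    rw [← card_pos]
    grind
  obtain ⟨hcw, hca, hcK⟩ : c ≠ w ∧ c ≠ a ∧ c ∈ K := by simpa using hc
  exact hthree <| hasCrossingMatching_three hdistinct (by simp [*, Ne.symm]) ⟨hy, haK, hya⟩
    ⟨hy', hcK, hy'_adj c hcK hca⟩ ⟨hu, hwK, huw⟩

lemma IsSplitPartition.isPendantCore_insert [DecidableEq V] (hK : IsSplitPartition G K)
    (hmax : ∀ u ∉ K, ∃ w ∈ K, ¬ G.Adj u w) (hNoIso : ∀ v, ∃ w, G.Adj v w) (hodd : Odd #K)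
    (hthree : ¬ HasCrossingMatching G K 3) {y y' z a : V} (hdistinct : [y, y', z].Nodup)
    (hy : y ∉ K) (hy' : y' ∉ K) (hz : z ∉ K) (hcover : ∀ w ∈ K, G.Adj y w ∨ G.Adj y' w)
    (hya : G.Adj y a) (hza : G.Adj z a) : IsPendantCore G (insert y' K) a := by
  have haK : a ∈ K := hK.mem_of_adj hy hya
  have hy_unique {w : V} (hyw : G.Adj y w) : w = a :=
    hK.eq_of_adj_of_cover hmax hthree hdistinct hy hy' hz hcover hya hza hyw
  have hy'_adj : ∀ c ∈ K, c ≠ a → G.Adj y' c := fun c hc hca ↦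
    (hcover c hc).resolve_left (mt hy_unique hca)
  have unique {u w : V} (hu : u ∉ insert y' K) (huw : G.Adj u w) : w = a := by
    rw [mem_insert, not_or] at hu
    rcases eq_or_ne u y with rfl | huy
    · exact hy_unique huw
    · refine hK.eq_of_adj_of_forall_adj hodd hthree (u := u) ?_ hy hy' hu.2 hya hy'_adj huw
      simp_all [eq_comm]
  have adj_apex {u : V} (hu : u ∉ insert y' K) : G.Adj u a := by
    obtain ⟨w, huw⟩ := hNoIso u
    exact unique hu huw ▸ huw
  refine ⟨mem_insert_of_mem haK, ?_, ?_, fun u hu w ↦ ⟨unique hu, fun h ↦ h ▸ adj_apex hu⟩, ?_⟩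
  · rw [card_insert_of_notMem hy']
    grind
  · have hy'a : y' ∉ ({a} : Set V) := (ne_of_mem_of_not_mem haK hy').symm
    rw [coe_insert, Set.insert_sdiff_of_notMem _ hy'a]
    exact (hK.isClique.subset Set.sdiff_subset).insert fun c hc _ ↦ hy'_adj c hc.1 hc.2
  · have eq_of_compl_adj {v : V} (hv : Gᶜ.Adj a v) : v = y' := by
      by_contra hvy'
      by_cases hvK : v ∈ K
      · exact hv.2 (hK.isClique haK hvK hv.1)
      · exact hv.2 (adj_apex (by simp [hvy', hvK])).symm
    exact fun v hv w hw ↦ (eq_of_compl_adj hv).trans (eq_of_compl_adj hw).symm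

lemma IsSplitPartition.isDominatingPair_of_compl_eq_pair [Fintype V] [DecidableEq V]
    (hK : IsSplitPartition G K) {y y' : V} (hcompl : Kᶜ = {y, y'}) (hyy' : y ≠ y')
    (hcover : ∀ w ∈ K, G.Adj y w ∨ G.Adj y' w) : IsDominatingPair G y y' := by
  have notMem_iff (v : V) : v ∉ K ↔ v = y ∨ v = y' := by
    simpa only [mem_compl, mem_insert, mem_singleton] using Finset.ext_iff.mp hcompl v
  have hyK : y ∉ K := (notMem_iff y).mpr (.inl rfl)
  have hy'K : y' ∉ K := (notMem_iff y').mpr (.inr rfl)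
  refine ⟨hyy', hK.isIndepSet_compl hyK hy'K hyy', hK.isClique.subset fun v hv ↦ ?_,
    fun v hvy hvy' ↦ hcover v ?_⟩
  · exact not_not.mp (mt (notMem_iff v).mp hv)
  · exact not_not.mp fun h ↦ ((notMem_iff v).mp h).elim hvy hvy'

lemma Equimatchable.isPendantCore_or_isDominatingPair_of_even [Fintype V] (hG : Equimatchable G)
    (hK : IsSplitPartition G K) (hmax : ∀ u ∉ K, ∃ w ∈ K, ¬ G.Adj u w)
    (hNoIso : ∀ v, ∃ w, G.Adj v w) (heven : Even #K) {u : V} (hu : u ∉ K) :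
    (∃ W x, IsPendantCore G W x ∧ #W + 2 ≤ Fintype.card V) ∨
      (Odd (Fintype.card V) ∧ ∃ x y, IsDominatingPair G x y) := by
  classical
  by_cases hall : ∀ u' ∉ K, u' = u
  · right
    have hcompl : Kᶜ = {u} := eq_singleton_iff_unique_mem.mpr (by simpa [hu] using hall)
    obtain ⟨w, hw, huw⟩ := hmax u hu
    refine ⟨?_, u, w, hK.isDominatingPair_of_compl_eq_singleton hcompl hw huw⟩
    rw [← card_compl_add_card K, hcompl, card_singleton]
    grind
  · left
    push Not at hall
    obtain ⟨u', hu', hne⟩ := hall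
    obtain ⟨x, hx⟩ := hG.exists_isPendantCore_of_even hK hNoIso heven hu' hu hne
    exact ⟨K, x, hx, card_add_two_le hu' hu hne⟩

lemma Equimatchable.isPendantCore_or_isDominatingPair_of_odd [Fintype V] (hG : Equimatchable G)
    (hK : IsSplitPartition G K) (hmax : ∀ u ∉ K, ∃ w ∈ K, ¬ G.Adj u w)
    (hNoIso : ∀ v, ∃ w, G.Adj v w) (hodd : Odd #K) {y : V} (hy : y ∉ K) :
    (∃ W x, IsPendantCore G W x ∧ #W + 2 ≤ Fintype.card V) ∨
      (Odd (Fintype.card V) ∧ ∃ x y, IsDominatingPair G x y) := by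
  classical
  obtain ⟨c, hyc⟩ := hNoIso y
  have hthree := hG.not_hasCrossingMatching_three hK hodd
    (hasCrossingMatching_one hy (hK.mem_of_adj hy hyc) hyc)
  obtain ⟨y', hy', hyy', hcover⟩ := hG.exists_cover hK hmax hodd hy hyc
  by_cases hall : ∀ z ∉ K, z = y ∨ z = y'
  · right
    have hcompl : Kᶜ = {y, y'} := by
      ext z
      simpa using ⟨hall z, by rintro (rfl | rfl) <;> assumption⟩
    refine ⟨?_, y, y', hK.isDominatingPair_of_compl_eq_pair hcompl hyy' hcover⟩
    rw [← card_compl_add_card K, hcompl, card_pair hyy']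
    grind
  · left
    push Not at hall
    obtain ⟨z, hz, hzy, hzy'⟩ := hall
    obtain ⟨a, hza⟩ := hNoIso z
    have haK : a ∈ K := hK.mem_of_adj hz hza
    wlog hya : G.Adj y a generalizing y y' c
    · have hy'a : G.Adj y' a := (hcover a haK).resolve_left hya
      exact this hy' a hy'a y hy hyy'.symm (fun w hw ↦ (hcover w hw).symm) hzy' hzy hy'a
    refine ⟨insert y' K, a, hK.isPendantCore_insert hmax hNoIso hodd hthree
      (by simp [hyy', hzy.symm, hzy'.symm]) hy hy' hz hcover hya hza, ?_⟩
    exact card_add_two_le (by simp [hyy', hy]) (by simp [hzy', hz]) hzy.symm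

theorem equimatchable_and_isSplitGraph_iff [Fintype V] (hNoIso : ∀ v, ∃ w, G.Adj v w) :
    Equimatchable G ∧ IsSplitGraph G ↔
      G = ⊤ ∨ (∃ W x, IsPendantCore G W x ∧ #W + 2 ≤ Fintype.card V) ∨
        (Odd (Fintype.card V) ∧ ∃ x y, IsDominatingPair G x y) := by
  constructor
  · rintro ⟨hG, hsplit⟩
    obtain ⟨K, hK, hmax⟩ := hsplit.exists_maximal_isSplitPartition
    by_cases hall : ∀ v, v ∈ K
    · exact .inl (hK.eq_top_of_forall_mem hall)
    obtain ⟨u, hu⟩ := not_forall.mp hall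
    right
    rcases Nat.even_or_odd #K with heven | hodd
    · exact hG.isPendantCore_or_isDominatingPair_of_even hK hmax hNoIso heven hu
    · exact hG.isPendantCore_or_isDominatingPair_of_odd hK hmax hNoIso hodd hu
  · rintro (rfl | ⟨W, x, hW, hcard⟩ | ⟨hodd, x, y, hxy⟩)
    · exact ⟨equimatchable_top, isSplitGraph_top⟩
    · obtain ⟨u, hu⟩ : ∃ u, u ∉ W := by
        by_contra! hall
        simp [eq_univ_of_forall hall] at hcard
      exact ⟨hW.equimatchable hu, hW.isSplitGraph⟩
    · exact ⟨hxy.equimatchable hodd, hxy.isSplitGraph⟩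

end Necessity

section Degrees

variable {G : SimpleGraph V} {W : Finset V} {x y : V}

variable [Fintype V] [DecidableRel G.Adj]

lemma sub_two_le_degree_iff (v : V) :
    Fintype.card V - 2 ≤ G.degree v ↔ (Gᶜ.neighborSet v).Subsingleton := by
  classical
  have hcompl : Gᶜ.degree v ≤ 1 ↔ (Gᶜ.neighborSet v).Subsingleton := by
    rw [← SimpleGraph.card_neighborFinset_eq_degree, card_le_one_iff_subsingleton]
    simp
  have := G.degree_lt_card_verts v
  rw [← hcompl, G.degree_compl]
  lia

lemma degree_eq_sub_one_or_sub_two_iff (v : V) :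
    G.degree v = Fintype.card V - 1 ∨ G.degree v = Fintype.card V - 2 ↔
      (Gᶜ.neighborSet v).Subsingleton := by
  have := G.degree_lt_card_verts v
  rw [← sub_two_le_degree_iff]
  lia

lemma degree_eq_sub_two_of_subsingleton (hsub : (Gᶜ.neighborSet x).Subsingleton)
    (huniv : ¬ G.IsUniversal x) : G.degree x = Fintype.card V - 2 := by
  rw [← G.degree_eq_card_sub_one] at huniv
  have := (sub_two_le_degree_iff x).mpr hsub
  have := G.degree_lt_card_verts x
  lia

/-- The vertices of degree one, counted by `r` in the theorem. -/
def leaves (G : SimpleGraph V) [DecidableRel G.Adj] : Finset V :=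
  univ.filter fun v ↦ G.degree v = 1

/-- The vertices adjacent to all others, counted by `p` in the theorem; this is the finset version
of `SimpleGraph.universalVerts`. -/
def universalVerts (G : SimpleGraph V) [DecidableRel G.Adj] : Finset V :=
  univ.filter fun v ↦ G.degree v = Fintype.card V - 1

lemma mem_leaves {v : V} : v ∈ leaves G ↔ G.degree v = 1 := by simp [leaves]

lemma mem_universalVerts {v : V} : v ∈ universalVerts G ↔ G.IsUniversal v := by
  simp [universalVerts]

lemma card_universalVerts_eq_card_iff : #(universalVerts G) = Fintype.card V ↔ G = ⊤ := by
  simp [card_eq_iff_eq_univ, eq_univ_iff_forall, mem_universalVerts,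
    SimpleGraph.eq_top_iff_forall_isUniversal]

lemma IsPendantCore.degree_of_notMem (h : IsPendantCore G W x) {u : V} (hu : u ∉ W) :
    G.degree u = 1 :=
  G.degree_eq_one_iff_existsUnique_adj.mpr
    ⟨x, (h.adj_iff u hu x).mpr rfl, fun w ↦ (h.adj_iff u hu w).mp⟩

lemma IsPendantCore.degree_of_adj (h : IsPendantCore G W x) {v : V} (hv : v ∈ W)
    (hxv : G.Adj x v) : G.degree v = #W - 1 := by
  classical
  have hnbhd : G.neighborFinset v = W.erase v := by
    ext w
    rw [SimpleGraph.mem_neighborFinset, mem_erase]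
    rcases eq_or_ne w x with rfl | hwx
    · simp [hxv.symm, hxv.ne, h.mem]
    · exact h.adj_iff_of_mem hv hxv.ne' hwx
  rw [← G.card_neighborFinset_eq_degree, hnbhd, card_erase_of_mem hv]

lemma IsPendantCore.degree_of_not_adj (h : IsPendantCore G W x) {v : V} (hv : v ∈ W)
    (hvx : v ≠ x) (hxv : ¬ G.Adj x v) : G.degree v = #W - 2 := by
  classical
  have hnbhd : G.neighborFinset v = (W.erase v).erase x := by
    ext w
    rw [SimpleGraph.mem_neighborFinset, mem_erase, mem_erase]
    rcases eq_or_ne w x with rfl | hwx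
    · simpa using mt SimpleGraph.Adj.symm hxv
    · simpa [hwx] using h.adj_iff_of_mem hv hvx hwx
  rw [← G.card_neighborFinset_eq_degree, hnbhd,
    card_erase_of_mem (mem_erase.mpr ⟨hvx.symm, h.mem⟩), card_erase_of_mem hv, Nat.sub_sub]

lemma IsPendantCore.leaves_eq_compl [DecidableEq V] (h : IsPendantCore G W x)
    (hW : 4 ≤ #W) : leaves G = Wᶜ := by
  ext v
  rw [mem_leaves, mem_compl]
  refine ⟨fun hdeg hv ↦ ?_, h.degree_of_notMem⟩
  by_cases hvx : v = x
  · subst hvx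
    have := (sub_two_le_degree_iff v).mpr h.subsingleton
    have := card_le_univ W
    lia
  by_cases hxv : G.Adj x v
  · have := h.degree_of_adj hv hxv
    lia
  · have := h.degree_of_not_adj hv hvx hxv
    lia

lemma isPendantCore_of_degree (hx : x ∈ W) (heven : Even #W)
    (houter : ∀ u ∉ W, G.degree u = 1 ∧ G.Adj u x)
    (hinner : ∀ v ∈ W, v ≠ x → v ≠ y → G.degree v = #W - 1)
    (hsub : (Gᶜ.neighborSet x).Subsingleton) : IsPendantCore G W x := by
  classical
  have adj_iff {u : V} (hu : u ∉ W) (w : V) : G.Adj u w ↔ w = x := by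
    have hunique := G.degree_eq_one_iff_existsUnique_adj.mp (houter u hu).1
    exact ⟨fun huw ↦ hunique.unique huw (houter u hu).2, fun h ↦ h ▸ (houter u hu).2⟩
  have adj_of_ne {v w : V} (hv : v ∈ W) (hw : w ∈ W) (hvx : v ≠ x) (hvy : v ≠ y)
      (hwv : w ≠ v) : G.Adj v w := by
    have hsubset : G.neighborFinset v ⊆ W.erase v := fun w hw ↦ by
      rw [SimpleGraph.mem_neighborFinset] at hw
      refine mem_erase.mpr ⟨hw.ne', ?_⟩
      by_contra hwW
      exact hvx ((adj_iff hwW v).mp hw.symm)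
    have hnbhd := eq_of_subset_of_card_le hsubset
      (by rw [card_erase_of_mem hv, G.card_neighborFinset_eq_degree, hinner v hv hvx hvy])
    rw [← SimpleGraph.mem_neighborFinset, hnbhd]
    exact mem_erase.mpr ⟨hwv, hw⟩
  refine ⟨hx, heven, fun a ha b hb hab ↦ ?_, fun u hu ↦ adj_iff hu, hsub⟩
  rcases eq_or_ne a y with rfl | hay
  · exact (adj_of_ne hb.1 ha.1 hb.2 hab.symm hab).symm
  · exact adj_of_ne ha.1 hb.1 ha.2 hay hab.symm

end Degrees

section DegreeConditions

variable {G : SimpleGraph V} {W : Finset V} {x y : V}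

variable [Fintype V] [DecidableRel G.Adj]

lemma IsPendantCore.universalVerts_eq_singleton (h : IsPendantCore G W x)
    (hW : #W + 2 ≤ Fintype.card V) (hx : G.IsUniversal x) : universalVerts G = {x} :=
  eq_singleton_iff_unique_mem.mpr ⟨mem_universalVerts.mpr hx,
    fun _ hv ↦ h.eq_of_isUniversal hW (mem_universalVerts.mp hv)⟩

lemma IsPendantCore.universalVerts_eq_empty (h : IsPendantCore G W x)
    (hW : #W + 2 ≤ Fintype.card V) (hx : ¬ G.IsUniversal x) : universalVerts G = ∅ :=
  eq_empty_of_forall_notMem fun v hv ↦ by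
    have hv := mem_universalVerts.mp hv
    exact hx (h.eq_of_isUniversal hW hv ▸ hv)

lemma IsPendantCore.card_sub_card_leaves (h : IsPendantCore G W x) (hW : 4 ≤ #W) :
    Fintype.card V - #(leaves G) = #W := by
  classical
  rw [h.leaves_eq_compl hW, ← card_compl, compl_compl]

lemma IsPendantCore.leaves_eq_of_card_eq_two [DecidableEq V] (h : IsPendantCore G W x)
    (hW : #W = 2) (hcard : 4 ≤ Fintype.card V) (hx : G.IsUniversal x) : leaves G = {x}ᶜ := by
  ext v
  rw [mem_leaves, mem_compl, mem_singleton]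
  rcases eq_or_ne v x with rfl | hvx
  · have := (G.degree_eq_card_sub_one v).mpr hx
    grind
  by_cases hv : v ∈ W
  · simp [h.degree_of_adj hv (hx hvx.symm), hW, hvx]
  · simp [h.degree_of_notMem hv, hvx]

lemma isPendantCore_of_isUniversal (hx : x ∈ W) (heven : Even #W) (huniv : G.IsUniversal x)
    (houter : ∀ u ∉ W, G.degree u = 1) (hinner : ∀ v ∈ W, v ≠ x → G.degree v = #W - 1) :
    IsPendantCore G W x :=
  isPendantCore_of_degree (y := x) hx heven
    (fun u hu ↦ ⟨houter u hu, (huniv (ne_of_mem_of_not_mem hx hu)).symm⟩)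
    (fun v hv hvx _ ↦ hinner v hv hvx) fun _ hv _ _ ↦ absurd (huniv hv.1) hv.2

lemma leaves_eq_of_card_eq [DecidableEq V] (hcard : 4 ≤ Fintype.card V)
    (hr : #(leaves G) = Fintype.card V - 1) (hx : G.IsUniversal x) : leaves G = {x}ᶜ := by
  refine eq_of_subset_of_card_le (fun v hv ↦ ?_) (by rw [card_compl, card_singleton, hr])
  rw [mem_leaves] at hv
  have hx := (G.degree_eq_card_sub_one x).mpr hx
  rw [mem_compl, mem_singleton]
  rintro rfl
  lia

lemma exists_isPendantCore_of_star (hcard : 4 ≤ Fintype.card V)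
    (hr : #(leaves G) = Fintype.card V - 1) (hx : G.IsUniversal x) :
    ∃ W, IsPendantCore G W x ∧ #W + 2 ≤ Fintype.card V := by
  classical
  have degree_eq_one {v : V} (hv : v ≠ x) : G.degree v = 1 := by
    rw [← mem_leaves, leaves_eq_of_card_eq hcard hr hx]
    simpa
  obtain ⟨z, hz⟩ := card_pos.mp (by rw [hr]; lia)
  have hxz : x ≠ z := by
    rintro rfl
    simp [leaves_eq_of_card_eq hcard hr hx] at hz
  have hW : #{x, z} = 2 := card_pair hxz
  refine ⟨{x, z}, isPendantCore_of_isUniversal (by simp) (by simp [hW]) hx (fun u hu ↦ ?_)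
    fun v _ hvx ↦ by rw [degree_eq_one hvx, hW], by lia⟩
  exact degree_eq_one fun h ↦ hu (by simp [h])

lemma isPendantCore_compl_leaves_of_isUniversal [DecidableEq V] (heven : Even #(leaves G)ᶜ)
    (huniv : G.IsUniversal x) (hx : x ∉ leaves G)
    (hdeg : ∀ v, v ≠ x → G.degree v = 1 ∨ G.degree v = #(leaves G)ᶜ - 1) :
    IsPendantCore G (leaves G)ᶜ x := by
  refine isPendantCore_of_isUniversal (mem_compl.mpr hx) heven huniv (by simp [mem_leaves])
    fun v hv hvx ↦ ?_
  rw [mem_compl, mem_leaves] at hv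
  exact (hdeg v hvx).resolve_left hv

theorem exists_isPendantCore_isUniversal_iff (hcard : 4 ≤ Fintype.card V) :
    (∃ W x, IsPendantCore G W x ∧ #W + 2 ≤ Fintype.card V ∧ G.IsUniversal x) ↔
      (#(leaves G) = Fintype.card V - 1 ∧ #(universalVerts G) = 1) ∨
      (#(universalVerts G) = 1 ∧ 2 ≤ #(leaves G) ∧ Even (Fintype.card V - #(leaves G)) ∧
        ∀ v, G.degree v = 1 ∨ G.degree v = Fintype.card V - #(leaves G) - 1 ∨
          G.degree v = Fintype.card V - 1) := by
  classical
  constructor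
  · rintro ⟨W, x, h, hW, hx⟩
    rw [h.universalVerts_eq_singleton hW hx, card_singleton]
    have hpos := card_pos.mpr ⟨x, h.mem⟩
    have heven := h.even_card
    rcases (by grind : #W = 2 ∨ 4 ≤ #W) with hW_two | hW_four
    · left
      rw [h.leaves_eq_of_card_eq_two hW_two hcard hx, card_compl, card_singleton]
      simp
    right
    have hsub := h.card_sub_card_leaves hW_four
    refine ⟨rfl, by lia, hsub ▸ heven, fun v ↦ ?_⟩
    rw [hsub]
    by_cases hv : v ∈ W
    · rcases eq_or_ne v x with rfl | hvx
      · exact .inr (.inr ((G.degree_eq_card_sub_one v).mpr hx))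
      · exact .inr (.inl (h.degree_of_adj hv (hx hvx.symm)))
    · exact .inl (h.degree_of_notMem hv)
  · have exists_universal (hp : #(universalVerts G) = 1) :
        ∃ x, ∀ v, G.IsUniversal v ↔ v = x := by
      obtain ⟨x, hx⟩ := card_eq_one.mp hp
      exact ⟨x, fun v ↦ by rw [← mem_universalVerts, hx, mem_singleton]⟩
    rintro (⟨hr, hp⟩ | ⟨hp, hr, heven, hdeg⟩) <;> obtain ⟨x, hx⟩ := exists_universal hp
    · have hxu := (hx x).mpr rfl
      obtain ⟨W, hW, hW_card⟩ := exists_isPendantCore_of_star hcard hr hxu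
      exact ⟨W, x, hW, hW_card, hxu⟩
    have hxu := (hx x).mpr rfl
    have hx_deg := (G.degree_eq_card_sub_one x).mpr hxu
    have hcompl : #(leaves G)ᶜ = Fintype.card V - #(leaves G) := card_compl _
    rw [← hcompl] at heven hdeg
    refine ⟨(leaves G)ᶜ, x, isPendantCore_compl_leaves_of_isUniversal heven hxu
      (by rw [mem_leaves]; lia) fun v hvx ↦ ?_, by lia, hxu⟩
    have hv_deg := mt (G.degree_eq_card_sub_one v).mp (mt (hx v).mp hvx)
    exact (hdeg v).imp_right (·.resolve_right hv_deg)

lemma isPendantCore_compl_leaves [DecidableEq V] (heven : Even #(leaves G)ᶜ)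
    (hsub : (Gᶜ.neighborSet x).Subsingleton) (hxy : x ≠ y) (hnadj : ¬ G.Adj x y)
    (hx : x ∉ leaves G) (hy : y ∉ leaves G)
    (hdeg : ∀ v, v ≠ x → v ≠ y → G.degree v = 1 ∨ G.degree v = #(leaves G)ᶜ - 1) :
    IsPendantCore G (leaves G)ᶜ x := by
  refine isPendantCore_of_degree (y := y) (mem_compl.mpr hx) heven (fun u hu ↦ ?_)
    (fun v hv hvx hvy ↦ ?_) hsub
  · rw [notMem_compl] at hu
    refine ⟨mem_leaves.mp hu, ?_⟩
    by_contra hux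
    have hux_compl : Gᶜ.Adj x u := ⟨(ne_of_mem_of_not_mem hu hx).symm, mt SimpleGraph.Adj.symm hux⟩
    exact hy (hsub ⟨hxy, hnadj⟩ hux_compl ▸ hu)
  · rw [mem_compl, mem_leaves] at hv
    exact (hdeg v hvx hvy).resolve_left hv

theorem exists_isPendantCore_not_isUniversal_iff (hNoIso : ∀ v, ∃ w, G.Adj v w)
    (hcard : 4 ≤ Fintype.card V) :
    (∃ W x, IsPendantCore G W x ∧ #W + 2 ≤ Fintype.card V ∧ ¬ G.IsUniversal x) ↔
      #(universalVerts G) = 0 ∧ 2 ≤ #(leaves G) ∧ Even (Fintype.card V - #(leaves G)) ∧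
        ∃ x y, x ≠ y ∧ ¬ G.Adj x y ∧ G.degree x = Fintype.card V - 2 ∧
          G.degree y = Fintype.card V - #(leaves G) - 2 ∧
          ∀ v, v ≠ x → v ≠ y → G.degree v = 1 ∨
            G.degree v = Fintype.card V - #(leaves G) - 1 := by
  classical
  constructor
  · rintro ⟨W, x, h, hW, hx⟩
    obtain ⟨y, hxy, hnadj⟩ : ∃ y, x ≠ y ∧ ¬ G.Adj x y := by
      simpa [SimpleGraph.IsUniversal] using hx
    have hyW : y ∈ W := h.mem_of_not_adj hnadj
    have hW_four : 4 ≤ #W := h.four_le_card hxy hnadj (hNoIso y)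
    have hsub := h.card_sub_card_leaves hW_four
    rw [h.universalVerts_eq_empty hW hx, card_empty, hsub]
    refine ⟨rfl, by lia, h.even_card, x, y, hxy, hnadj,
      degree_eq_sub_two_of_subsingleton h.subsingleton hx,
      h.degree_of_not_adj hyW hxy.symm hnadj, fun v hvx hvy ↦ ?_⟩
    by_cases hv : v ∈ W
    · have hxv : G.Adj x v := by
        by_contra hxv
        exact hvy (h.subsingleton ⟨hvx.symm, hxv⟩ ⟨hxy, hnadj⟩)
      exact .inr (h.degree_of_adj hv hxv)
    · exact .inl (h.degree_of_notMem hv)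
  · rintro ⟨-, hr, heven, x, y, hxy, hnadj, hx, hy, hdeg⟩
    have hcompl : #(leaves G)ᶜ = Fintype.card V - #(leaves G) := card_compl _
    rw [← hcompl] at heven hy hdeg
    have hy_leaf : y ∉ leaves G := by
      rw [mem_leaves, hy]
      grind
    refine ⟨(leaves G)ᶜ, x, ?_, by lia, fun hxu ↦ hnadj (hxu hxy)⟩
    exact isPendantCore_compl_leaves heven ((sub_two_le_degree_iff x).mp hx.ge) hxy hnadj
      (by rw [mem_leaves]; lia) hy_leaf hdeg

lemma degree_add_degree_eq [DecidableEq V] (x y : V) : G.degree x + G.degree y =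
    #(G.neighborFinset x ∪ G.neighborFinset y) + #(G.neighborFinset x ∩ G.neighborFinset y) := by
  rw [card_union_add_card_inter, G.card_neighborFinset_eq_degree, G.card_neighborFinset_eq_degree]

lemma neighborFinset_union_of_not_adj [DecidableEq V] (hnadj : ¬ G.Adj x y)
    (hor : ∀ v, v ≠ x → v ≠ y → G.Adj x v ∨ G.Adj y v) :
    G.neighborFinset x ∪ G.neighborFinset y = {x, y}ᶜ := by
  ext v
  simp only [mem_union, SimpleGraph.mem_neighborFinset, mem_compl, mem_insert, mem_singleton,
    not_or]
  refine ⟨?_, fun hv ↦ hor v hv.1 hv.2⟩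
  rintro (hxv | hyv)
  · exact ⟨hxv.ne', fun hvy ↦ hnadj (hvy ▸ hxv)⟩
  · exact ⟨fun hvx ↦ hnadj (hvx ▸ hyv).symm, hyv.ne'⟩

lemma universalVerts_subset_inter [DecidableEq V] (hxy : x ≠ y) (hnadj : ¬ G.Adj x y) :
    universalVerts G ⊆ G.neighborFinset x ∩ G.neighborFinset y := fun v hv ↦ by
  simp only [mem_inter, SimpleGraph.mem_neighborFinset, mem_universalVerts] at hv ⊢
  refine ⟨(hv ?_).symm, (hv ?_).symm⟩ <;> rintro rfl
  exacts [hnadj (hv hxy), hnadj (hv hxy.symm).symm]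

lemma universalVerts_subset_insert [DecidableEq V] (x y : V) :
    universalVerts G ⊆ insert x (insert y (G.neighborFinset x ∩ G.neighborFinset y)) :=
  fun v hv ↦ by
    simp only [mem_insert, mem_inter, SimpleGraph.mem_neighborFinset]
    rcases eq_or_ne v x with hvx | hvx
    · exact .inl hvx
    rcases eq_or_ne v y with hvy | hvy
    · exact .inr (.inl hvy)
    have hv := mem_universalVerts.mp hv
    exact .inr (.inr ⟨(hv hvx).symm, (hv hvy).symm⟩)

lemma IsDominatingPair.neighborFinset_inter [DecidableEq V] (h : IsDominatingPair G x y) :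
    G.neighborFinset x ∩ G.neighborFinset y = universalVerts G := by
  refine Subset.antisymm (fun v hv ↦ ?_) (universalVerts_subset_inter h.ne h.not_adj)
  simp only [mem_inter, SimpleGraph.mem_neighborFinset, mem_universalVerts] at hv ⊢
  intro w hvw
  rcases eq_or_ne w x with rfl | hwx
  · exact hv.1.symm
  rcases eq_or_ne w y with rfl | hwy
  · exact hv.2.symm
  exact h.isClique_compl (by simp [hv.1.ne', hv.2.ne']) (by simp [hwx, hwy]) hvw

lemma IsDominatingPair.degree_add_degree (h : IsDominatingPair G x y) :
    G.degree x + G.degree y = #(universalVerts G) + Fintype.card V - 2 := by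
  classical
  have hpair := card_pair h.ne
  have := card_le_univ {x, y}
  rw [degree_add_degree_eq, neighborFinset_union_of_not_adj h.not_adj h.adj_or_adj,
    h.neighborFinset_inter, card_compl, hpair]
  lia

lemma isDominatingPair_of_degree (hxy : x ≠ y) (hnadj : ¬ G.Adj x y)
    (hsum : G.degree x + G.degree y = #(universalVerts G) + Fintype.card V - 2)
    (hsub : ∀ v, v ≠ x → v ≠ y → (Gᶜ.neighborSet v).Subsingleton) : IsDominatingPair G x y := by
  classical
  have hor (v : V) (hvx : v ≠ x) (hvy : v ≠ y) : G.Adj x v ∨ G.Adj y v :=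
    adj_or_adj_of_subsingleton hxy hvx hvy (hsub v hvx hvy)
  have hinter : universalVerts G = G.neighborFinset x ∩ G.neighborFinset y := by
    refine eq_of_subset_of_card_le (universalVerts_subset_inter hxy hnadj) ?_
    have hpair := card_pair hxy
    have := card_le_univ {x, y}
    rw [degree_add_degree_eq, neighborFinset_union_of_not_adj hnadj hor, card_compl] at hsum
    lia
  refine ⟨hxy, hnadj, fun a ha b hb hab ↦ ?_, hor⟩
  simp only [Set.mem_compl_iff, Set.mem_insert_iff, Set.mem_singleton_iff, not_or] at ha hb
  by_contra hab_adj
  have adj_of_ne {w : V} (hwa : w ≠ a) (hwb : b ≠ w) : G.Adj w a := by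
    by_contra hwa_adj
    exact hwb (hsub a ha.1 ha.2 ⟨hab, hab_adj⟩ ⟨hwa.symm, mt SimpleGraph.Adj.symm hwa_adj⟩)
  have ha_universal : a ∈ universalVerts G := by
    simpa [hinter] using ⟨adj_of_ne (Ne.symm ha.1) hb.1, adj_of_ne (Ne.symm ha.2) hb.2⟩
  exact hab_adj (mem_universalVerts.mp ha_universal hab)

-- Here `x` and `y` have exactly `p - 2` common neighbours, while every universal vertex is a common
-- neighbour or one of `x` and `y`; so `x` and `y` are themselves universal.
lemma eq_top_of_degree (hadj : G.Adj x y)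
    (hsum : G.degree x + G.degree y = #(universalVerts G) + Fintype.card V - 2)
    (hsub : ∀ v, v ≠ x → v ≠ y → (Gᶜ.neighborSet v).Subsingleton) : G = ⊤ := by
  classical
  have hunion : G.neighborFinset x ∪ G.neighborFinset y = univ := by
    refine eq_univ_iff_forall.mpr fun v ↦ ?_
    simp only [mem_union, SimpleGraph.mem_neighborFinset]
    rcases eq_or_ne v x with rfl | hvx
    · exact .inr hadj.symm
    rcases eq_or_ne v y with rfl | hvy
    · exact .inl hadj
    exact adj_or_adj_of_subsingleton hadj.ne hvx hvy (hsub v hvx hvy)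
  have huniversal : universalVerts G =
      insert x (insert y (G.neighborFinset x ∩ G.neighborFinset y)) := by
    refine eq_of_subset_of_card_le (universalVerts_subset_insert x y) ?_
    have := card_insert_le x (insert y (G.neighborFinset x ∩ G.neighborFinset y))
    have := card_insert_le y (G.neighborFinset x ∩ G.neighborFinset y)
    rw [degree_add_degree_eq, hunion, card_univ] at hsum
    have := Fintype.card_pos_iff.mpr ⟨x⟩
    lia
  have hx : G.IsUniversal x := mem_universalVerts.mp (by simp [huniversal])
  have hy : G.IsUniversal y := mem_universalVerts.mp (by simp [huniversal])
  refine SimpleGraph.eq_top_iff_forall_isUniversal.mpr fun v ↦ mem_universalVerts.mp ?_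
  simp only [huniversal, mem_insert, mem_inter, SimpleGraph.mem_neighborFinset]
  rcases eq_or_ne v x with hvx | hvx
  · exact .inl hvx
  rcases eq_or_ne v y with hvy | hvy
  · exact .inr (.inl hvy)
  exact .inr (.inr ⟨hx hvx.symm, hy hvy.symm⟩)

theorem eq_top_or_exists_isDominatingPair_iff [Nontrivial V] :
    (G = ⊤ ∨ ∃ x y, IsDominatingPair G x y) ↔
      ∃ x y, x ≠ y ∧ G.degree x + G.degree y = #(universalVerts G) + Fintype.card V - 2 ∧
        ∀ v, v ≠ x → v ≠ y →
          G.degree v = Fintype.card V - 1 ∨ G.degree v = Fintype.card V - 2 := by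
  simp only [degree_eq_sub_one_or_sub_two_iff]
  constructor
  · rintro (hG | ⟨x, y, h⟩)
    · obtain ⟨x, y, hxy⟩ := exists_pair_ne V
      have hdeg (v : V) : G.degree v = Fintype.card V - 1 :=
        (G.degree_eq_card_sub_one v).mpr (SimpleGraph.eq_top_iff_forall_isUniversal.mp hG v)
      refine ⟨x, y, hxy, ?_, fun v _ _ ↦ (degree_eq_sub_one_or_sub_two_iff v).mp (.inl (hdeg v))⟩
      rw [hdeg, hdeg, card_universalVerts_eq_card_iff.mpr hG]
      lia
    · exact ⟨x, y, h.ne, h.degree_add_degree, fun v ↦ h.subsingleton⟩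
  · rintro ⟨x, y, hxy, hsum, hsub⟩
    by_cases hadj : G.Adj x y
    · exact .inl (eq_top_of_degree hadj hsum hsub)
    · exact .inr ⟨x, y, isDominatingPair_of_degree hxy hadj hsum hsub⟩

end DegreeConditions

theorem stmt_8 {V : Type*} [Fintype V] [DecidableEq V]
    (G : SimpleGraph V) [DecidableRel G.Adj]
    (n : ℕ) (hn : Fintype.card V = n) (hn4 : 4 ≤ n)
    (hNoIso : ∀ v : V, ∃ w : V, G.Adj v w)
    (r p : ℕ)
    (hr : r = (Finset.univ.filter fun v : V => G.degree v = 1).card)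
    (hp : p = (Finset.univ.filter fun v : V => G.degree v = n - 1).card)
 :
    (Equimatchable G ∧ IsSplitGraph G) ↔
      p = n ∨
      (r = n - 1 ∧ p = 1) ∨
      (p = 1 ∧ 2 ≤ r ∧ Even (n - r) ∧
        ∀ v : V, G.degree v = 1 ∨ G.degree v = n - r - 1 ∨ G.degree v = n - 1) ∨
      (p = 0 ∧ 2 ≤ r ∧ Even (n - r) ∧
        ∃ x y : V, x ≠ y ∧ ¬ G.Adj x y ∧
          G.degree x = n - 2 ∧ G.degree y = n - r - 2 ∧
          ∀ v : V, v ≠ x → v ≠ y → (G.degree v = 1 ∨ G.degree v = n - r - 1)) ∨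
      (Odd n ∧ ∃ x y : V, x ≠ y ∧ G.degree x + G.degree y = p + n - 2 ∧
        ∀ v : V, v ≠ x → v ≠ y → (G.degree v = n - 1 ∨ G.degree v = n - 2)) := by
  subst hn
  have : Nontrivial V := Fintype.one_lt_card_iff_nontrivial.mp (by lia)
  obtain rfl : r = #(leaves G) := hr
  obtain rfl : p = #(universalVerts G) := hp
  have hcore : (∃ W x, IsPendantCore G W x ∧ #W + 2 ≤ Fintype.card V) ↔
      (∃ W x, IsPendantCore G W x ∧ #W + 2 ≤ Fintype.card V ∧ G.IsUniversal x) ∨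
        ∃ W x, IsPendantCore G W x ∧ #W + 2 ≤ Fintype.card V ∧ ¬ G.IsUniversal x := by
    simp only [← exists_or, ← and_or_left, em, and_true]
  rw [equimatchable_and_isSplitGraph_iff hNoIso, hcore,
    exists_isPendantCore_isUniversal_iff hn4,
    exists_isPendantCore_not_isUniversal_iff hNoIso hn4, card_universalVerts_eq_card_iff,
    ← eq_top_or_exists_isDominatingPair_iff]
  grind only
end
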